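/- arXiv:1710.04865 — 6 statements merged into one kernel-verified Lean document; each statement's English description precedes it below -/
import Mathlib

section
/- Let m, p, N be positive integers and let ζ be a complex number with ζ^N = 1. Set ξ = ζ^{−1}. Then Σ_{N−1 ≥ n_{2mp} ≥ ⋯ ≥ n_1 ≥ 0} (ζ;ζ)_{n_{2mp}} (−1)^{n_{2mp}} ζ^{−n_{2mp}(n_{2mp}+1)/2} · ∏_{1 ≤ i < j ≤ 2mp, m ∤ i} ζ^{Δ_{i,j,m} n_i n_j} · ∏_{i=1}^{2p−1} (−1)^{n_{mi}} ζ^{n_{mi}(n_{mi}+1)/2} · ∏_{i=1}^{2mp−1} ζ^{β_{i,m} n_i} [n_{i+1}; n_i]_ζ = Σ_{N−1 ≥ n ≥ 0, n = n_m ≥ n_{m−1} ≥ ⋯ ≥ n_1 ≥ 0, n = s_p ≥ s_{p−1} ≥ ⋯ ≥ s_1 ≥ 0} ((ξ;ξ)_n)² (−1)^n ξ^{−n(n+1)/2} ∏_{i=1}^{m−1} ξ^{n_i²+n_i} [n_{i+1}; n_i]_ξ ∏_{j=1}^{p−1} ξ^{−s_j − s_{j+1}s_j} [s_{j+1}; s_j]_ξ.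 (The left-hand side is 𝓕_{m,p}(ζ) and the right-hand side is 𝓤_{m,p}(−1; ζ^{−1}); truncating both sums at N−1 loses nothing since (ζ;ζ)_n = 0 for n ≥ N.) -/
open Finset

noncomputable section

/-- The q-Pochhammer symbol `(a; q)_n = ∏_{k=0}^{n-1} (1 - a q^k)`. -/
def qPoch (a q : ℂ) (n : ℕ) : ℂ := ∏ k ∈ Finset.range n, (1 - a * q ^ k)

/-- The Gaussian binomial coefficient `[n; k]_q` as a polynomial in `q` over `ℤ`,
defined by the q-Pascal rule `[n; k] = [n-1; k-1] + q^k [n-1; k]`.  It is the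
polynomial equal to `(q;q)_n / ((q;q)_{n-k} (q;q)_k)`. -/
def gaussPoly : ℕ → ℕ → Polynomial ℤ
  | _, 0 => 1
  | 0, _ + 1 => 0
  | n + 1, k + 1 => gaussPoly n k + Polynomial.X ^ (k + 1) * gaussPoly n (k + 1)

/-- The Gaussian binomial coefficient `[n; k]_q` evaluated at `q : ℂ`. -/
def gbin (q : ℂ) (n k : ℕ) : ℂ := Polynomial.aeval q (gaussPoly n k)

/-- `σ_j = (-1)^⌊(2j-1)t/l⌋`. -/
def sigmaT (l t j : ℕ) : ℤ := (-1) ^ ((2 * j - 1) * t / l)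

/-- `r(j)`: the unique integer with `r(j) ≡ (2j-1)t (mod 2l)` and `-l < r(j) < l`. -/
def rT (l t j : ℕ) : ℤ :=
  if (((2 * j - 1) * t % (2 * l) : ℕ) : ℤ) < (l : ℤ) then (((2 * j - 1) * t % (2 * l) : ℕ) : ℤ)
  else (((2 * j - 1) * t % (2 * l) : ℕ) : ℤ) - 2 * (l : ℤ)

/-- `r'(j) = (|r(j)| + 1)/2`. -/
def rpT (l t j : ℕ) : ℕ := ((rT l t j).natAbs + 1) / 2

open Classical in
/-- `i_k`: the unique `j ∈ {1, …, (l-1)/2}` with `r'(j) = k`. -/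
def iT (l t k : ℕ) : ℕ :=
  if h : ∃ j, j ∈ Finset.Icc 1 ((l - 1) / 2) ∧ rpT l t j = k then h.choose else 0

/-- `ε_{i,j,m}`: `1` if `j ≡ -i, -i-1 (mod 2m)`, `-1` if `j ≡ i, i-1 (mod 2m)`,
`0` otherwise (and `0` when `m ∣ i`, a case excluded in all uses). -/
def epsLO (m i j : ℕ) : ℤ :=
  if m ∣ i then 0
  else if 2 * m ∣ (i + j) ∨ 2 * m ∣ (i + j + 1) then 1
  else if (2 * (m : ℤ)) ∣ ((j : ℤ) - (i : ℤ)) ∨ (2 * (m : ℤ)) ∣ ((j : ℤ) - (i : ℤ) + 1) then -1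
  else 0

/-- `Δ_{i,j,m}`: `1` if `j ≡ -i, -i+1 (mod 2m)`, `-1` if `j ≡ i, i+1 (mod 2m)`,
`0` otherwise (and `0` when `m ∣ i`, a case excluded in all uses). -/
def deltaLO (m i j : ℕ) : ℤ :=
  if m ∣ i then 0
  else if 2 * m ∣ (i + j) ∨ 2 * m ∣ (i + j - 1) then 1
  else if (2 * (m : ℤ)) ∣ ((j : ℤ) - (i : ℤ)) ∨ (2 * (m : ℤ)) ∣ ((j : ℤ) - (i : ℤ) - 1) then -1
  else 0

/-- `γ_{i,m} = 1` if `i ≡ 1, …, m-1 (mod 2m)` and `-1` otherwise. -/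
def gamLO (m i : ℕ) : ℤ :=
  if 1 ≤ i % (2 * m) ∧ i % (2 * m) ≤ m - 1 then 1 else -1

/-- `β_{i,m} = 1` if `i ≡ 1, …, m-1 (mod 2m)`, `-1` if `i ≡ m+1, …, 2m-1 (mod 2m)`,
and `0` if `m ∣ i`. -/
def betLO (m i : ℕ) : ℤ :=
  if 1 ≤ i % (2 * m) ∧ i % (2 * m) ≤ m - 1 then 1
  else if m + 1 ≤ i % (2 * m) ∧ i % (2 * m) ≤ 2 * m - 1 then -1
  else 0

/-- Extend a tuple `f : Fin P → Fin N` to `n : ℕ → ℕ` with `n i = f (i-1)` for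
`1 ≤ i ≤ P` and `n i = 0` otherwise (in particular `n 0 = 0`). -/
def extTup (P N : ℕ) (f : Fin P → Fin N) : ℕ → ℕ :=
  fun i => if h : 1 ≤ i ∧ i ≤ P then (f ⟨i - 1, by omega⟩ : ℕ) else 0

/-- Takata's exponent `a(n)` (an integer; every integer division below is exact). -/
def aT (l t : ℕ) (n : ℕ → ℕ) : ℤ :=
  -(∑ j ∈ Icc 1 ((l - 1) / 2), (∑ k ∈ Icc (rpT l t j) ((l - 1) / 2),
      (sigmaT l t (iT l t k) + sigmaT l t (iT l t ((l - 1) / 2 + 1 - k))) / 2) *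
      ((n j : ℤ) - (n (j - 1) : ℤ)))
  - ∑ j ∈ Icc 1 ((l - 1) / 2 - 1), ((sigmaT l t (j + 1) + sigmaT l t ((l - 1) / 2 + 1 - j)) / 2) * (n j : ℤ)
  - ((sigmaT l t ((l - 1) / 2) + 1) / 2) * (n ((l - 1) / 2) : ℤ)
  - ∑ j ∈ Icc 1 ((l - 1) / 2), sigmaT l t j

/-- Takata's exponent `b₁(n)` (an integer; every integer division below is exact
whenever the factor it multiplies is nonzero). -/
def b1T (l t : ℕ) (n : ℕ → ℕ) : ℤ :=
  -aT l t n
  + ∑ k ∈ Icc 1 ((l - t) / 2), ((1 - sigmaT l t (iT l t k)) / 2) * (n (iT l t k - 1) : ℤ)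
  - ∑ k ∈ Icc ((l - t) / 2 + 1) ((l - 1) / 2), (n (iT l t k - 1) : ℤ)
  + ∑ k ∈ Icc ((l - t) / 2 + 1) ((l - 1) / 2), ((1 + sigmaT l t (iT l t k)) / 2) * (n (iT l t k) : ℤ)
  - (1 + sigmaT l t ((l - 1) / 2)) * (n ((l - 1) / 2) : ℤ)
  + ∑ j ∈ Icc 1 ((l - 1) / 2 - 1), ((sigmaT l t (j + 1) - sigmaT l t j) / 2) * (n j : ℤ)
  - ∑ k ∈ Icc 1 ((l - 1) / 2 - 1), ∑ k' ∈ Icc (k + 1) ((l - 1) / 2),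
      ((1 + Int.sign ((iT l t k : ℤ) - (iT l t k' : ℤ))) / 2) *
        ((sigmaT l t (iT l t k) - sigmaT l t (iT l t k')) / 2) *
        ((n (iT l t k) : ℤ) - (n (iT l t k - 1) : ℤ)) *
        ((n (iT l t k') : ℤ) - (n (iT l t k' - 1) : ℤ))
  + ∑ j ∈ Icc 1 ((l - 1) / 2), sigmaT l t j *
      (∑ k ∈ Icc 1 (rpT l t j), ((n (iT l t k) : ℤ) - (n (iT l t k - 1) : ℤ))) * (n (j - 1) : ℤ)

/-- Takata's exponent `b₂(n)`. -/
def b2T (l t : ℕ) (n : ℕ → ℕ) : ℤ :=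
  if l < 2 * t then
    ∑ k ∈ Icc ((l - t) / 2 + 1) ((t - 1) / 2),
      ((1 + sigmaT l t (iT l t k)) / 2) * (n (iT l t k - 1) : ℤ)
  else
    -∑ k ∈ Icc ((t + 1) / 2 + 1) ((l - t) / 2),
      ((1 + sigmaT l t (iT l t k)) / 2) * (n (iT l t k - 1) : ℤ)

/-- Takata's `κ(p')`. -/
def kapT (l t N : ℕ) (n : ℕ → ℕ) : ℤ :=
  if sigmaT l t ((l - 1) / 2) = -1 then -(N : ℤ) * (n ((l - 1) / 2) : ℤ) else 0

/-- Takata's `τ(j)`. -/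
def tauT (l t : ℕ) (q : ℂ) (n : ℕ → ℕ) (j : ℕ) : ℂ :=
  if sigmaT l t j = -1 then (-1 : ℂ) ^ (n j - n (j - 1))
  else q ^ ((((n j : ℤ) - (n (j - 1) : ℤ)) * (((n j : ℤ) - (n (j - 1) : ℤ)) + 1)) / 2)

/-- Takata's `X(n)`. -/
def XT (l t N : ℕ) (q : ℂ) (n : ℕ → ℕ) : ℂ :=
  (-1 : ℂ) ^ (n ((l - 1) / 2)) * q ^ kapT l t N n *
    (qPoch q q (N - 1) * qPoch q q (n ((l - 1) / 2)) / qPoch q q (N - n ((l - 1) / 2) - 1)) *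
    ∏ j ∈ Icc 1 ((l - 1) / 2), tauT l t q n j / qPoch q q (n j - n (j - 1))

theorem gbin_zero_right (q : ℂ) (n : ℕ) : gbin q n 0 = 1 := by
  cases n <;> simp [gbin, gaussPoly]

theorem gbin_zero_succ (q : ℂ) (k : ℕ) : gbin q 0 (k + 1) = 0 := by
  simp [gbin, gaussPoly]

theorem gbin_succ_succ (q : ℂ) (n k : ℕ) :
    gbin q (n + 1) (k + 1) = gbin q n k + q ^ (k + 1) * gbin q n (k + 1) := by
  simp [gbin, gaussPoly]

theorem gbin_eq_zero (q : ℂ) {n k : ℕ} (h : n < k) : gbin q n k = 0 := by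
  induction n generalizing k with
  | zero => obtain ⟨k, rfl⟩ := Nat.exists_eq_succ_of_ne_zero (by omega : k ≠ 0)
            exact gbin_zero_succ q k
  | succ n ih =>
    obtain ⟨k, rfl⟩ := Nat.exists_eq_succ_of_ne_zero (by omega : k ≠ 0)
    rw [gbin_succ_succ, ih (by omega), ih (by omega)]; simp

theorem gbin_self (q : ℂ) (n : ℕ) : gbin q n n = 1 := by
  induction n with
  | zero => exact gbin_zero_right q 0
  | succ n ih => rw [gbin_succ_succ, ih, gbin_eq_zero q (Nat.lt_succ_self n)]; simp

theorem qPoch_zero (a q : ℂ) : qPoch a q 0 = 1 := by simp [qPoch]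

theorem qPoch_succ (a q : ℂ) (n : ℕ) :
    qPoch a q (n + 1) = qPoch a q n * (1 - a * q ^ n) := by
  simp [qPoch, Finset.prod_range_succ]

theorem qPoch_succ_left (a q : ℂ) (n : ℕ) :
    qPoch a q (n + 1) = (1 - a) * qPoch (a * q) q n := by
  simp only [qPoch, Finset.prod_range_succ', pow_zero, mul_one]
  rw [mul_comm]
  congr 1
  exact Finset.prod_congr rfl fun k _ => by ring

theorem qPoch_add (q : ℂ) (a b : ℕ) :
    qPoch q q (a + b) = qPoch q q a * qPoch (q ^ (1 + a)) q b := by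
  induction b with
  | zero => simp [qPoch_zero]
  | succ b ih =>
    rw [← add_assoc, qPoch_succ, ih, qPoch_succ]
    ring

/-- `(q;q)_n` does not vanish when `q` is not a root of unity. -/
theorem qPoch_ne_zero {q : ℂ} (hq : ∀ k : ℕ, q ^ (k + 1) ≠ 1) (n : ℕ) : qPoch q q n ≠ 0 := by
  rw [qPoch, Finset.prod_ne_zero_iff]
  intro k _ h
  apply hq k
  rw [pow_succ']
  linear_combination -h

/-- The Gaussian binomial coefficient as a quotient of q-factorials. -/
theorem gbin_mul_qPoch (q : ℂ) (a b : ℕ) :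
    gbin q (a + b) a * (qPoch q q a * qPoch q q b) = qPoch q q (a + b) := by
  induction a generalizing b with
  | zero => simp [gbin_zero_right, qPoch_zero]
  | succ a iha =>
    induction b with
    | zero => simp [gbin_self, qPoch_zero]
    | succ b ihb =>
      have h1 := iha (b + 1)
      have e1 : a + 1 + (b + 1) = (a + (b + 1)) + 1 := by ring
      have e2 : a + 1 + b = a + (b + 1) := by ring
      rw [e2] at ihb
      rw [e1, gbin_succ_succ, qPoch_succ q q (a + (b + 1)), ← h1]
      rw [← h1] at ihb
      rw [qPoch_succ q q b, qPoch_succ q q a] at *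
      linear_combination (q ^ (a + 1) * (1 - q * q ^ b)) * ihb

theorem gbin_eq_div {q : ℂ} (hq : ∀ k : ℕ, q ^ (k + 1) ≠ 1) (a b : ℕ) :
    gbin q (a + b) a = qPoch q q (a + b) / (qPoch q q a * qPoch q q b) := by
  rw [eq_div_iff (mul_ne_zero (qPoch_ne_zero hq _) (qPoch_ne_zero hq _))]
  exact gbin_mul_qPoch q a b

theorem gbin_symm {q : ℂ} (hq : ∀ k : ℕ, q ^ (k + 1) ≠ 1) (a b : ℕ) :
    gbin q (a + b) a = gbin q (a + b) b := by
  rw [gbin_eq_div hq, add_comm a b, gbin_eq_div hq, mul_comm]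

theorem gbin_mul_gbin {q : ℂ} (hq : ∀ k : ℕ, q ^ (k + 1) ≠ 1) (a b c : ℕ) :
    gbin q (a + b + c) (a + b) * gbin q (a + b) a
      = gbin q (a + b + c) a * gbin q (b + c) b := by
  rw [gbin_eq_div hq, gbin_eq_div hq, gbin_eq_div hq, add_assoc a b c, gbin_eq_div hq]
  have := qPoch_ne_zero hq
  field_simp [this]

/-- The finite q-binomial theorem. -/
theorem sum_gbin_eq_qPoch (q z : ℂ) (M : ℕ) :
    ∑ l ∈ range (M + 1), (-1) ^ l * q ^ (l.choose 2) * z ^ l * gbin q M l = qPoch z q M := by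
  induction M generalizing z with
  | zero => simp [gbin_zero_right, qPoch_zero]
  | succ M ih =>
    rw [qPoch_succ_left, ← ih (z * q), Finset.sum_range_succ']
    simp only [gbin_succ_succ, mul_add, Finset.sum_add_distrib]
    have h0 : ∑ l ∈ range (M + 1), (-1) ^ l * q ^ (l.choose 2) * (z * q) ^ l * gbin q M l
        = ∑ l ∈ range (M + 1), (-1) ^ (l + 1) * q ^ ((l + 1).choose 2) * z ^ (l + 1) *
            (q ^ (l + 1) * gbin q M (l + 1)) + 1 := by
      rw [Finset.sum_range_succ', Finset.sum_range_succ _ M, gbin_eq_zero q (Nat.lt_succ_self M)]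
      simp only [mul_zero, add_zero, gbin_zero_right, pow_zero, Nat.choose_zero_succ, mul_one]
      congr 1
      exact Finset.sum_congr rfl fun l _ => by ring
    have h1 : ∑ l ∈ range (M + 1), (-1) ^ (l + 1) * q ^ ((l + 1).choose 2) * z ^ (l + 1) *
          gbin q M l
        = -z * ∑ l ∈ range (M + 1), (-1) ^ l * q ^ (l.choose 2) * (z * q) ^ l * gbin q M l := by
      rw [Finset.mul_sum]
      refine Finset.sum_congr rfl fun l _ => ?_
      rw [Nat.choose_succ_succ' l 1, Nat.choose_one_right]
      ring
    rw [h1]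
    simp only [gbin_zero_right, pow_zero, Nat.choose_zero_succ, mul_one]
    linear_combination -h0

/-- The q-Vandermonde convolution. -/
theorem gbin_vandermonde (q : ℂ) (a b s : ℕ) :
    gbin q (a + b) s
      = ∑ j ∈ range (s + 1), gbin q a j * gbin q b (s - j) * q ^ ((a - j) * (s - j)) := by
  induction a generalizing s with
  | zero =>
    rw [Finset.sum_range_succ']
    simp [gbin_zero_succ, gbin_zero_right]
  | succ a ih =>
    cases s with
    | zero => simp [gbin_zero_right]
    | succ s =>
      rw [show a + 1 + b = (a + b) + 1 by ring, gbin_succ_succ, ih s, ih (s + 1),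
        Finset.sum_range_succ' _ (s + 1), Finset.sum_range_succ' _ (s + 1)]
      simp only [gbin_succ_succ, gbin_zero_right, add_mul, Finset.sum_add_distrib,
        Nat.add_sub_add_right, mul_add, Finset.mul_sum]
      rw [add_assoc]
      congr 2
      · refine Finset.sum_congr rfl fun j hj => ?_
        rcases Nat.lt_or_ge a (j + 1) with h | h
        · simp [gbin_eq_zero q h]
        · obtain ⟨e, rfl⟩ := Nat.exists_eq_add_of_le h
          obtain ⟨f, rfl⟩ := Nat.exists_eq_add_of_le (Nat.lt_succ_iff.mp (mem_range.mp hj))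
          rw [show j + 1 + e - (j + 1) = e by omega, show j + 1 + e - j = e + 1 by omega,
            show j + f - j = f by omega]
          ring
      · simp only [Nat.sub_zero, one_mul]
        ring

/-- A form of the q-Pfaff–Saalschütz summation: the product of two Gaussian binomials with the
same upper index. -/
theorem gbin_mul_gbin_eq_sum {q : ℂ} (hq : ∀ k : ℕ, q ^ (k + 1) ≠ 1) (D a b : ℕ) :
    gbin q D a * gbin q D b
      = ∑ w ∈ range (a + 1),
          q ^ ((b - w) * (a - w)) * gbin q b w * gbin q a w * gbin q (D + w) (a + b) := by
  rcases Nat.lt_or_ge D b with hb | hb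
  · rw [gbin_eq_zero q hb, mul_zero]
    symm
    refine Finset.sum_eq_zero fun w hw => ?_
    rw [gbin_eq_zero q (show D + w < a + b by have := mem_range.mp hw; omega), mul_zero]
  obtain ⟨c, rfl⟩ := Nat.exists_eq_add_of_le hb
  have h1 : ∀ j ∈ range (a + 1),
      gbin q b j * gbin q c (a - j) * q ^ ((b - j) * (a - j)) * gbin q (b + c) b
      = ∑ w ∈ Ico j (a + 1), q ^ ((b - w) * (a - w)) * gbin q b w * gbin q a w *
          (gbin q w j * gbin q (b + c) (a + b - j) * q ^ ((w - j) * (a + b - j))) := by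
    intro j hj
    have hja : j ≤ a := Nat.lt_succ_iff.mp (mem_range.mp hj)
    obtain ⟨s, rfl⟩ := Nat.exists_eq_add_of_le hja
    rcases Nat.lt_or_ge b j with hbj | hbj
    · rw [gbin_eq_zero q hbj]
      symm
      simp only [zero_mul]
      refine Finset.sum_eq_zero fun w hw => ?_
      rw [gbin_eq_zero q (show b < w by have := mem_Ico.mp hw; omega)]
      simp
    obtain ⟨e, rfl⟩ := Nat.exists_eq_add_of_le hbj
    have h2 : gbin q (j + e + c) (j + e) * gbin q c s
        = gbin q (j + e + c) (j + s + (j + e) - j) * gbin q (j + s + e) s := by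
      rcases Nat.lt_or_ge c s with hcs | hcs
      · rw [gbin_eq_zero q hcs,
          gbin_eq_zero q (show j + e + c < j + s + (j + e) - j by omega)]
        simp
      obtain ⟨f, rfl⟩ := Nat.exists_eq_add_of_le hcs
      rw [show j + s + (j + e) - j = (j + e) + s by omega, ← add_assoc (j + e) s f,
        show j + s + e = (j + e) + s by ring, ← gbin_symm hq (j + e) s,
        gbin_mul_gbin hq (j + e) s f]
    rw [show j + s - j = s by omega, show j + e - j = e by omega]
    have h3 : gbin q (j + s + e) s
        = ∑ i ∈ range (s + 1), gbin q (j + s) (j + i) * gbin q e i * q ^ ((j + i) * i) := by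
      rw [gbin_vandermonde, ← Finset.sum_range_reflect]
      refine Finset.sum_congr rfl fun i hi => ?_
      obtain ⟨g, rfl⟩ := Nat.exists_eq_add_of_le (Nat.lt_succ_iff.mp (mem_range.mp hi))
      rw [show i + g + 1 - 1 - i = g by omega, show i + g - g = i by omega,
        show j + (i + g) - g = j + i by omega, show j + (i + g) = g + (j + i) by omega,
        gbin_symm hq g (j + i)]
    rw [Finset.sum_Ico_eq_sum_range, show j + s + 1 - j = s + 1 by omega]
    calc _ = gbin q (j + e) j * q ^ (e * s) *
          (gbin q (j + e + c) (j + e) * gbin q c s) := by ring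
      _ = _ := by
        rw [h2, h3, Finset.mul_sum, Finset.mul_sum]
        refine Finset.sum_congr rfl fun i hi => ?_
        rcases Nat.lt_or_ge e i with hei | hei
        · rw [gbin_eq_zero q hei, gbin_eq_zero q (show j + e < j + i by omega)]
          simp
        obtain ⟨f, rfl⟩ := Nat.exists_eq_add_of_le hei
        obtain ⟨g, rfl⟩ := Nat.exists_eq_add_of_le (Nat.lt_succ_iff.mp (mem_range.mp hi))
        have h4 := gbin_mul_gbin hq j i f
        rw [add_assoc j i f] at h4
        rw [show j + (i + f) - (j + i) = f by omega, show j + (i + g) - (j + i) = g by omega,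
          show j + i - j = i by omega, show j + (i + g) + (j + (i + f)) - j = i + g + j + i + f by omega]
        linear_combination (-(q ^ ((i + f) * (i + g)) * gbin q (j + (i + f) + c)
          (i + g + j + i + f) * gbin q (j + (i + g)) (j + i) * q ^ ((j + i) * i))) * h4
  conv_lhs => rw [gbin_vandermonde q b c a, Finset.sum_mul, Finset.sum_congr rfl h1]
  rw [Finset.sum_comm' (t' := range (a + 1)) (s' := fun w => range (w + 1))
    (by intro x y; simp only [mem_range, mem_Ico]; omega)]
  refine Finset.sum_congr rfl fun w hw => ?_
  have hwa : w ≤ a := Nat.lt_succ_iff.mp (mem_range.mp hw)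
  rw [← Finset.mul_sum, add_comm (b + c) w, gbin_vandermonde q w (b + c) (a + b)]
  congr 1
  refine Finset.sum_subset (by intro t; simp only [mem_range]; omega) fun t _ ht => ?_
  rw [gbin_eq_zero q (show w < t by simpa using ht)]
  simp

/-- The triangular number `n (n + 1) / 2` as an integer. -/
def tri (n : ℕ) : ℤ := ((n : ℤ) * ((n : ℤ) + 1)) / 2

theorem tri_succ (n : ℕ) : tri (n + 1) = tri n + n + 1 := by
  unfold tri
  push_cast
  rw [show ((n : ℤ) + 1) * (n + 1 + 1) = n * (n + 1) + (n + 1) * 2 by ring,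
    Int.add_mul_ediv_right _ _ two_ne_zero]
  ring

theorem tri_zero : tri 0 = 0 := by simp [tri]

theorem tri_add (a b : ℕ) : tri (a + b) = tri a + tri b + a * b := by
  induction b with
  | zero => simp [tri_zero]
  | succ b ih =>
    rw [← add_assoc, tri_succ, ih, tri_succ]
    push_cast
    ring

theorem tri_add_tri (n : ℕ) : tri n + tri n = n ^ 2 + n := by
  induction n with
  | zero => simp [tri_zero]
  | succ n ih =>
    rw [tri_succ]
    push_cast
    linear_combination ih

theorem tri_eq_choose (n : ℕ) : tri n = (n.choose 2 : ℕ) + n := by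
  induction n with
  | zero => simp [tri_zero]
  | succ n ih =>
    rw [tri_succ, ih, Nat.choose_succ_succ' n 1, Nat.choose_one_right]
    push_cast
    ring

/-- The signed Gaussian weight `(-1)^n q^{n(n+1)/2}`. -/
def sgnTri (q : ℂ) (n : ℕ) : ℂ := (-1) ^ n * q ^ tri n

/-- The q-binomial theorem for the weights `(-1)^l q^{l(l+1)/2 + l d}`. -/
theorem sum_sgnTri_mul_gbin {q : ℂ} (h0 : q ≠ 0) (d M : ℕ) :
    ∑ l ∈ range (M + 1), sgnTri q l * q ^ ((l : ℤ) * d) * gbin q M l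
      = qPoch (q ^ (1 + d)) q M := by
  rw [← sum_gbin_eq_qPoch]
  refine Finset.sum_congr rfl fun l _ => ?_
  rw [sgnTri, tri_eq_choose, zpow_add₀ h0, zpow_natCast, zpow_natCast, ← pow_mul,
    show (l : ℤ) * d = ((l * d : ℕ) : ℤ) by push_cast; ring, zpow_natCast]
  ring

/-- The closed form of the sum over the central variable of a block. -/
def centerWt (q : ℂ) (U V W : ℕ) : ℂ :=
  gbin q U V * sgnTri q V * q ^ (((W : ℤ) - V) * V) * qPoch (q ^ (1 + W)) q (U - V)

theorem centerWt_eq_zero (q : ℂ) {U V : ℕ} (W : ℕ) (h : U < V) : centerWt q U V W = 0 := by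
  simp [centerWt, gbin_eq_zero q h]

theorem sgnTri_add {q : ℂ} (h0 : q ≠ 0) (a b : ℕ) :
    sgnTri q (a + b) = sgnTri q a * sgnTri q b * q ^ ((a : ℤ) * b) := by
  simp only [sgnTri, tri_add, zpow_add₀ h0, pow_add]
  ring

theorem sum_center {q : ℂ} (h0 : q ≠ 0) (hq : ∀ k : ℕ, q ^ (k + 1) ≠ 1) {N U : ℕ} (V W : ℕ)
    (hU : U < N) :
    ∑ c ∈ range N, sgnTri q c * gbin q U c * gbin q c V * q ^ (-((V : ℤ) * c)) *
      q ^ ((W : ℤ) * c) = centerWt q U V W := by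
  rcases Nat.lt_or_ge U V with h | h
  · rw [centerWt_eq_zero q W h]
    refine Finset.sum_eq_zero fun c _ => ?_
    rcases Nat.lt_or_ge c V with h' | h'
    · simp [gbin_eq_zero q h']
    · simp [gbin_eq_zero q (show U < c by omega)]
  obtain ⟨R, rfl⟩ := Nat.exists_eq_add_of_le h
  rw [centerWt, show V + R - V = R by omega, ← sum_sgnTri_mul_gbin h0, Finset.mul_sum]
  symm
  refine Finset.sum_of_injOn (fun l => V + l) (fun a _ b _ hab => by simpa using hab)
    (fun l hl => ?_) (fun c _ hc => ?_) (fun l hl => ?_)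
  · simp only [coe_range, Set.mem_Iio] at hl ⊢
    omega
  · rcases Nat.lt_or_ge c V with h' | h'
    · simp [gbin_eq_zero q h']
    · have : V + R < c := by
        by_contra hcon
        exact hc ⟨c - V, by simp only [coe_range, Set.mem_Iio]; omega, by
          simp only []; omega⟩
      simp [gbin_eq_zero q this]
  · obtain ⟨f, rfl⟩ := Nat.exists_eq_add_of_le (Nat.lt_succ_iff.mp (mem_range.mp hl))
    have h1 := gbin_mul_gbin hq V l f
    rw [add_assoc] at h1
    have h2 : q ^ (((W : ℤ) - V) * V) * q ^ ((l : ℤ) * W)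
        = q ^ ((V : ℤ) * l) * q ^ (-((V : ℤ) * (V + l : ℕ))) * q ^ ((W : ℤ) * (V + l : ℕ)) := by
      rw [← zpow_add₀ h0, ← zpow_add₀ h0, ← zpow_add₀ h0]
      congr 1
      push_cast
      ring
    rw [sgnTri_add h0]
    linear_combination sgnTri q V * sgnTri q l * (gbin q (V + (l + f)) V * gbin q (l + f) l) * h2
      - sgnTri q V * sgnTri q l * (q ^ ((V : ℤ) * l) * q ^ (-((V : ℤ) * (V + l : ℕ))) *
          q ^ ((W : ℤ) * (V + l : ℕ))) * h1

theorem sum_triangle {N V R : ℕ} (hN : V + R < N) (f : ℕ → ℕ → ℂ)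
    (hf : ∀ u v, ¬ (V ≤ v ∧ v ≤ u ∧ u ≤ V + R) → f u v = 0) :
    ∑ u ∈ range N, ∑ v ∈ range N, f u v
      = ∑ e ∈ range (R + 1), ∑ l ∈ range (R - e + 1), f (V + l + e) (V + l) := by
  rw [← Finset.sum_product', Finset.sum_sigma']
  symm
  refine Finset.sum_of_injOn (fun s : (_ : ℕ) × ℕ => (V + s.2 + s.1, V + s.2))
    ?_ ?_ ?_ (fun _ _ => rfl)
  · rintro ⟨a, b⟩ _ ⟨c, d⟩ _ h
    simp only [Prod.mk.injEq] at h
    obtain rfl : a = c := by omega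
    obtain rfl : b = d := by omega
    rfl
  · rintro ⟨e, l⟩ h
    simp only [coe_sigma, Set.mem_sigma_iff, coe_range, Set.mem_Iio, coe_product,
      Set.mem_prod] at h ⊢
    omega
  · rintro ⟨u, v⟩ _ h
    refine hf u v fun hc => h ⟨⟨u - v, v - V⟩, ?_, ?_⟩
    · simp only [coe_sigma, Set.mem_sigma_iff, coe_range, Set.mem_Iio]
      omega
    · simp only [Prod.mk.injEq]
      omega

theorem sum_diagonal (W R : ℕ) (g : ℕ → ℕ → ℂ)
    (hg : ∀ d w, ¬ (w ≤ d ∧ d ≤ w + R) → g d w = 0) :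
    ∑ w ∈ range (W + 1), ∑ e ∈ range (R + 1), g (e + w) w
      = ∑ d ∈ range (R + W + 1), ∑ w ∈ range (W + 1), g d w := by
  rw [Finset.sum_comm (s := range (R + W + 1)) (f := g)]
  refine Finset.sum_congr rfl fun w hw => ?_
  refine Finset.sum_of_injOn (g := fun d => g d w) (fun e => e + w) (fun a _ b _ hab => by simpa using hab)
    (fun e he => ?_) (fun d _ hd => ?_) (fun _ _ => rfl)
  · simp only [coe_range, Set.mem_Iio, mem_range] at he hw ⊢
    omega
  · refine hg d w fun hc => hd ⟨d - w, ?_, ?_⟩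
    · simp only [coe_range, Set.mem_Iio]
      omega
    · exact Nat.sub_add_cancel hc.1

/-- The weight of one layer of a block: `U, V, W` are the outer values of the left, right and
auxiliary chains and `u, v, w` the inner ones. -/
def layerWt (q : ℂ) (U V W u v w : ℕ) : ℂ :=
  q ^ (-((u : ℤ) * U) + v * (u + U) - V * v + W * v - w * W + w * ((v : ℤ) - u - U)) *
    gbin q U u * gbin q v V * gbin q W w * centerWt q u v w

theorem sum_layer_inner {q : ℂ} (h0 : q ≠ 0) (hq : ∀ k : ℕ, q ^ (k + 1) ≠ 1) (V W w e M : ℕ) :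
    ∑ l ∈ range (M + 1), layerWt q (V + (e + M)) V W (V + l + e) (V + l) w
      = gbin q (V + (e + M)) V * gbin q (e + M) e * gbin q W w * qPoch (q ^ (1 + w)) q e *
        sgnTri q V *
        q ^ (-((e + w : ℤ) * (e + M)) - (e + w) * w + (w : ℤ) ^ 2 - w * W + ((W : ℤ) - V) * V) *
        qPoch (q ^ (1 + (e + w + W))) q M := by
  rw [← sum_sgnTri_mul_gbin h0 (e + w + W) M, Finset.mul_sum]
  refine Finset.sum_congr rfl fun l hl => ?_
  obtain ⟨f, rfl⟩ := Nat.exists_eq_add_of_le (Nat.lt_succ_iff.mp (mem_range.mp hl))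
  have h1 : gbin q (V + (e + (l + f))) (V + l + e) * gbin q (V + l + e) (V + l) *
      gbin q (V + l) V
      = gbin q (V + (e + (l + f))) V * gbin q (e + (l + f)) e * gbin q (l + f) l := by
    have hne := qPoch_ne_zero hq
    have h2 := gbin_eq_div hq (V + l + e) f
    rw [show V + l + e + f = V + (e + (l + f)) by ring] at h2
    rw [h2, gbin_eq_div hq, gbin_eq_div hq, gbin_eq_div hq, gbin_eq_div hq, gbin_eq_div hq]
    field_simp [hne]
  rw [layerWt, centerWt, sgnTri_add h0, show V + l + e - (V + l) = e by omega]
  set A := q ^ (-((e + w : ℤ) * (e + (l + f : ℕ))) - (e + w) * w + (w : ℤ) ^ 2 - w * W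
    + ((W : ℤ) - V) * V) with hA
  have h3 : q ^ (-(((V + l + e : ℕ) : ℤ) * (V + (e + (l + f)) : ℕ)) +
        ((V + l : ℕ) : ℤ) * ((V + l + e : ℕ) + (V + (e + (l + f)) : ℕ)) - V * ((V + l : ℕ) : ℤ)
        + W * ((V + l : ℕ) : ℤ) - w * W +
        w * (((V + l : ℕ) : ℤ) - (V + l + e : ℕ) - (V + (e + (l + f)) : ℕ))) *
      q ^ ((V : ℤ) * l) * q ^ (((w : ℤ) - (V + l : ℕ)) * (V + l : ℕ))
      = A * q ^ ((l : ℤ) * (e + w + W : ℕ)) := by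
    rw [hA, ← zpow_add₀ h0, ← zpow_add₀ h0, ← zpow_add₀ h0]
    congr 1
    push_cast
    ring
  linear_combination (gbin q W w * sgnTri q V * sgnTri q l * qPoch (q ^ (1 + w)) q e *
      (gbin q (V + (e + (l + f))) (V + l + e) * gbin q (V + l + e) (V + l) * gbin q (V + l) V)) * h3
    + (gbin q W w * sgnTri q V * sgnTri q l * qPoch (q ^ (1 + w)) q e *
      (A * q ^ ((l : ℤ) * (e + w + W : ℕ)))) * h1

theorem qPoch_pow_eq_div {q : ℂ} (hq : ∀ k : ℕ, q ^ (k + 1) ≠ 1) (a b : ℕ) :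
    qPoch (q ^ (1 + a)) q b = qPoch q q (a + b) / qPoch q q a := by
  rw [qPoch_add, mul_div_cancel_left₀ _ (qPoch_ne_zero hq a)]

theorem sum_layer_outer {q : ℂ} (h0 : q ≠ 0) (hq : ∀ k : ℕ, q ^ (k + 1) ≠ 1) (W R d : ℕ) :
    ∑ w ∈ range (W + 1), (if w ≤ d ∧ d ≤ w + R then
        gbin q R (d - w) * gbin q W w * qPoch (q ^ (1 + w)) q (d - w) *
        q ^ (-((d : ℤ) * R) - d * w + (w : ℤ) ^ 2 - w * W) *
        qPoch (q ^ (1 + (d + W))) q (R - (d - w)) else 0)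
      = qPoch (q ^ (1 + W)) q R * q ^ (-((d : ℤ) * (R + W))) * gbin q (R + W) d := by
  have hne := qPoch_ne_zero hq
  have h1 : qPoch (q ^ (1 + W)) q R = gbin q (R + W) W * qPoch q q R := by
    rw [add_comm R W, gbin_eq_div hq, qPoch_pow_eq_div hq]
    field_simp [hne]
  rw [h1]
  calc _ = ∑ w ∈ range (W + 1), q ^ (-((d : ℤ) * (R + W))) * qPoch q q R *
      (q ^ ((d - w) * (W - w)) * gbin q d w * gbin q W w * gbin q (R + W + w) (W + d)) := ?_
    _ = _ := by
      rw [← Finset.mul_sum, ← gbin_mul_gbin_eq_sum hq]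
      ring
  refine Finset.sum_congr rfl fun w hw => ?_
  obtain ⟨g, rfl⟩ := Nat.exists_eq_add_of_le (Nat.lt_succ_iff.mp (mem_range.mp hw))
  split_ifs with h
  · obtain ⟨e, rfl⟩ := Nat.exists_eq_add_of_le h.1
    obtain ⟨M, rfl⟩ := Nat.exists_eq_add_of_le (show e ≤ R by omega)
    rw [show w + e - w = e by omega, show e + M - e = M by omega, show w + g - w = g by omega]
    have h2 := gbin_eq_div hq (w + g + (w + e)) M
    rw [show w + g + (w + e) + M = e + M + (w + g) + w by ring] at h2
    have h3 : q ^ (-((w + e : ℕ) : ℤ) * (e + M : ℕ) - (w + e : ℕ) * w + (w : ℤ) ^ 2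
          - w * (w + g : ℕ))
        = q ^ (-(((w + e : ℕ) : ℤ) * ((e + M : ℕ) + (w + g : ℕ)))) * q ^ (e * g) := by
      rw [← zpow_natCast, ← zpow_add₀ h0]
      congr 1
      push_cast
      ring
    rw [← neg_mul, h3, h2, qPoch_pow_eq_div hq, qPoch_pow_eq_div hq, gbin_eq_div hq e M,
      gbin_eq_div hq w e, show w + e + (w + g) + M = e + M + (w + g) + w by ring,
      show w + e + (w + g) = w + g + (w + e) by ring]
    have hz : q ^ (-(((w + e : ℕ) : ℤ) * ((e + M : ℕ) + (w + g : ℕ)))) ≠ 0 := zpow_ne_zero _ h0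
    field_simp [hne]
  · rcases Nat.lt_or_ge d w with hd | hd
    · simp [gbin_eq_zero q hd]
    · rw [gbin_eq_zero q (show R + (w + g) + w < w + g + d by omega)]
      simp

/-- Summing out one layer of a block. -/
theorem sum_layer {q : ℂ} (h0 : q ≠ 0) (hq : ∀ k : ℕ, q ^ (k + 1) ≠ 1) {N U : ℕ} (V W : ℕ)
    (hU : U < N) (K : ℕ → ℂ) :
    ∑ u ∈ range N, ∑ v ∈ range N, ∑ w ∈ range (W + 1), layerWt q U V W u v w * K (u + w - v)
      = centerWt q U V W * ∑ d ∈ range (U + W - V + 1),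
          q ^ (-((d : ℤ) * (U + W - V : ℕ))) * gbin q (U + W - V) d * K d := by
  have hzero : ∀ w u v, ¬ (V ≤ v ∧ v ≤ u ∧ u ≤ U) → layerWt q U V W u v w = 0 := by
    intro w u v h
    rw [layerWt]
    rcases Nat.lt_or_ge U u with h' | h'
    · simp [gbin_eq_zero q h']
    rcases Nat.lt_or_ge v V with h'' | h''
    · simp [gbin_eq_zero q h'']
    · rw [centerWt_eq_zero q w (show u < v by omega), mul_zero]
  rcases Nat.lt_or_ge U V with h | h
  · rw [centerWt_eq_zero q W h, zero_mul]
    refine Finset.sum_eq_zero fun u _ => Finset.sum_eq_zero fun v _ =>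
      Finset.sum_eq_zero fun w _ => ?_
    rw [hzero w u v (by omega), zero_mul]
  obtain ⟨R, rfl⟩ := Nat.exists_eq_add_of_le h
  rw [show V + R + W - V = R + W by omega, Finset.sum_congr rfl fun u _ => Finset.sum_comm,
    Finset.sum_comm]
  obtain ⟨H, hH⟩ : ∃ H : ℕ → ℕ → ℂ, ∀ d w, H d w = (if w ≤ d ∧ d ≤ w + R then
        gbin q R (d - w) * gbin q W w * qPoch (q ^ (1 + w)) q (d - w) *
        q ^ (-((d : ℤ) * R) - d * w + (w : ℤ) ^ 2 - w * W) *
        qPoch (q ^ (1 + (d + W))) q (R - (d - w)) else 0) *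
        (gbin q (V + R) V * sgnTri q V * q ^ (((W : ℤ) - V) * V) * K d) := ⟨_, fun _ _ => rfl⟩
  have h1 : ∀ w ∈ range (W + 1),
      ∑ u ∈ range N, ∑ v ∈ range N, layerWt q (V + R) V W u v w * K (u + w - v)
      = ∑ e ∈ range (R + 1), H (e + w) w := by
    intro w _
    rw [sum_triangle hU _ fun u v huv => by rw [hzero w u v huv, zero_mul]]
    refine Finset.sum_congr rfl fun e he => ?_
    obtain ⟨M, rfl⟩ := Nat.exists_eq_add_of_le (Nat.lt_succ_iff.mp (mem_range.mp he))
    have h2 : ∀ l, V + l + e + w - (V + l) = e + w := fun l => by omega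
    simp only [h2]
    rw [← Finset.sum_mul, show e + M - e = M by omega, sum_layer_inner h0 hq,
      hH, if_pos (by omega), show e + w - w = e by omega, show e + M - e = M by omega,
      zpow_add₀ h0]
    push_cast
    ring
  rw [Finset.sum_congr rfl h1, sum_diagonal _ _ _ fun d w hdw => by simp [hH, hdw], Finset.mul_sum]
  refine Finset.sum_congr rfl fun d _ => ?_
  simp only [hH]
  rw [← Finset.sum_mul, sum_layer_outer h0 hq, centerWt, show V + R - V = R by omega]
  push_cast
  ring

/-- Iterated summation of `F` over the coordinates listed in `L`, each running over `range N`. -/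
def sumOver (N : ℕ) : List ℕ → ((ℕ → ℕ) → ℂ) → (ℕ → ℕ) → ℂ
  | [], F, x => F x
  | i :: L, F, x => ∑ c ∈ range N, sumOver N L F (Function.update x i c)

theorem sumOver_congr {N : ℕ} {L : List ℕ} {F G : (ℕ → ℕ) → ℂ} {x : ℕ → ℕ}
    (h : ∀ z : ℕ → ℕ, (∀ i, i ∉ L → z i = x i) → (∀ i ∈ L, z i < N) → F z = G z) :
    sumOver N L F x = sumOver N L G x := by
  induction L generalizing x with
  | nil => exact h x (fun _ _ => rfl) (by simp)
  | cons a L ih =>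
    refine Finset.sum_congr rfl fun c hc => ih fun z hz hz' => h z (fun i hi => ?_) fun i hi => ?_
    · simp only [List.mem_cons, not_or] at hi
      rw [hz i hi.2, Function.update_of_ne hi.1]
    · by_cases hL : i ∈ L
      · exact hz' i hL
      · obtain rfl : i = a := by simpa [hL] using hi
        rw [hz i hL, Function.update_self]
        exact mem_range.mp hc

theorem sumOver_append (N : ℕ) (L L' : List ℕ) (F : (ℕ → ℕ) → ℂ) (x : ℕ → ℕ) :
    sumOver N (L ++ L') F x = sumOver N L (sumOver N L' F) x := by
  induction L generalizing x with
  | nil => rfl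
  | cons a L ih => exact Finset.sum_congr rfl fun c _ => ih _

theorem sumOver_sum {ι : Type*} (N : ℕ) (L : List ℕ) (s : Finset ι) (F : ι → (ℕ → ℕ) → ℂ)
    (x : ℕ → ℕ) :
    sumOver N L (fun z => ∑ j ∈ s, F j z) x = ∑ j ∈ s, sumOver N L (F j) x := by
  induction L generalizing x with
  | nil => rfl
  | cons a L ih =>
    simp only [sumOver, ih]
    exact Finset.sum_comm

theorem sumOver_mul_left (N : ℕ) (L : List ℕ) (a : ℂ) (F : (ℕ → ℕ) → ℂ) (x : ℕ → ℕ) :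
    sumOver N L (fun z => a * F z) x = a * sumOver N L F x := by
  induction L generalizing x with
  | nil => rfl
  | cons i L ih => simp only [sumOver, ih, Finset.mul_sum]

theorem sumOver_perm {N : ℕ} {L L' : List ℕ} (h : L.Perm L') (hL : L.Nodup)
    (F : (ℕ → ℕ) → ℂ) (x : ℕ → ℕ) : sumOver N L F x = sumOver N L' F x := by
  induction h generalizing x with
  | nil => rfl
  | cons a _ ih => exact Finset.sum_congr rfl fun c _ => ih hL.of_cons _
  | swap a b l =>
    simp only [sumOver]
    rw [Finset.sum_comm]
    refine Finset.sum_congr rfl fun c _ => Finset.sum_congr rfl fun d _ => ?_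
    rw [Function.update_comm]
    simp only [List.nodup_cons, List.mem_cons, not_or] at hL
    exact hL.1.1
  | trans h₁ _ ih₁ ih₂ => rw [ih₁ hL, ih₂ (h₁.nodup_iff.mp hL)]

/-- The indices `c - k, …, c + k`, listed from the outside inwards. -/
def layers (c : ℕ) : ℕ → List ℕ
  | 0 => [c]
  | k + 1 => (c + (k + 1)) :: (c - (k + 1)) :: layers c k

theorem mem_layers {c k i : ℕ} (hk : k ≤ c) : i ∈ layers c k ↔ c - k ≤ i ∧ i ≤ c + k := by
  induction k with
  | zero => simp only [layers, List.mem_singleton]; omega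
  | succ k ih =>
    simp only [layers, List.mem_cons, ih (by omega)]
    omega

theorem nodup_layers {c k : ℕ} (hk : k ≤ c) : (layers c k).Nodup := by
  induction k with
  | zero => simp [layers]
  | succ k ih =>
    simp only [layers, List.nodup_cons, List.mem_cons, mem_layers (show k ≤ c by omega)]
    exact ⟨by omega, by omega, ih (by omega)⟩

/-- The multiple sum `∑ ∏_j q^{-d_j d_{j+1}} [d_{j+1}; d_j] y_j^{d_j}` over chains of length `k`
below `w`. -/
def chainSum (q : ℂ) (y : ℕ → ℂ) : ℕ → ℕ → ℂ
  | 0, _ => 1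
  | k + 1, w => ∑ d ∈ range (w + 1),
      q ^ (-((d : ℤ) * w)) * gbin q w d * (y (k + 1) ^ d * chainSum q y k d)

/-- The coupling of the `j`-th layer around `c` with lower blocks. -/
def skew (c j : ℕ) (z : ℕ → ℕ) : ℤ :=
  (z (c - j) : ℤ) + z (c - j + 1) - z (c + j) - z (c + j + 1)

/-- The weight of the layers `1, …, k` around the centre `c`. -/
def blockWt (q : ℂ) (y : ℕ → ℂ) (c k : ℕ) (z : ℕ → ℕ) : ℂ :=
  sgnTri q (z c) * gbin q (z (c + 1)) (z c) * gbin q (z c) (z (c - 1)) *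
    q ^ (-((z (c - 1) : ℤ) * z c)) *
    ∏ j ∈ Icc 1 k, y j ^ ((z (c + j) : ℤ) - z (c - j)) *
      q ^ (-((z (c + j) : ℤ) * z (c + j + 1)) + z (c - j) * ((z (c + j) : ℤ) + z (c + j + 1))
        - z (c - j - 1) * z (c - j)) *
      gbin q (z (c + j + 1)) (z (c + j)) * gbin q (z (c - j)) (z (c - j - 1))

theorem blockWt_succ (q : ℂ) (y : ℕ → ℂ) (c k : ℕ) (z : ℕ → ℕ) :
    blockWt q y c (k + 1) z = blockWt q y c k z *
      (y (k + 1) ^ ((z (c + (k + 1)) : ℤ) - z (c - (k + 1))) *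
      q ^ (-((z (c + (k + 1)) : ℤ) * z (c + (k + 1) + 1))
        + z (c - (k + 1)) * ((z (c + (k + 1)) : ℤ) + z (c + (k + 1) + 1))
        - z (c - (k + 1) - 1) * z (c - (k + 1))) *
      gbin q (z (c + (k + 1) + 1)) (z (c + (k + 1))) *
      gbin q (z (c - (k + 1))) (z (c - (k + 1) - 1))) := by
  rw [blockWt, blockWt, Finset.prod_Icc_succ_top (by omega)]
  ring

/-- Summing out all the layers of a block. -/
theorem sum_block {q : ℂ} (h0 : q ≠ 0) (hq : ∀ k : ℕ, q ^ (k + 1) ≠ 1) {N : ℕ} {y : ℕ → ℂ}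
    (hy : ∀ j, y j ≠ 0) {c k : ℕ} (hk : k < c) {x : ℕ → ℕ} (hx : x (c + k + 1) < N) (w : ℕ) :
    sumOver N (layers c k) (fun z => blockWt q y c k z * q ^ ((w : ℤ) * z (c - k)) *
        chainSum q (fun j => y j * q ^ skew c j z) k w) x
      = centerWt q (x (c + k + 1)) (x (c - k - 1)) w *
        chainSum q y k (x (c + k + 1) + w - x (c - k - 1)) := by
  induction k generalizing x w with
  | zero =>
    simp only [layers, sumOver, chainSum, mul_one, add_zero, Nat.sub_zero] at hx ⊢
    rw [← sum_center h0 hq _ w hx]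
    refine Finset.sum_congr rfl fun a _ => ?_
    rw [blockWt]
    simp [Function.update_of_ne (show c - 1 ≠ c by omega)]
  | succ k ih =>
    simp only [layers, sumOver]
    rw [chainSum]
    have hsum := sum_layer h0 hq (x (c - (k + 1) - 1)) w hx
      (fun d => y (k + 1) ^ d * chainSum q y k d)
    rw [← hsum]
    refine Finset.sum_congr rfl fun u hu => Finset.sum_congr rfl fun v _ => ?_
    set x' := Function.update (Function.update x (c + (k + 1)) u) (c - (k + 1)) v with hx'
    have hu' : x' (c + (k + 1)) = u := by
      rw [hx', Function.update_of_ne (by omega), Function.update_self]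
    have hv' : x' (c - (k + 1)) = v := by rw [hx', Function.update_self]
    have hU' : x' (c + (k + 1) + 1) = x (c + (k + 1) + 1) := by
      rw [hx', Function.update_of_ne (by omega), Function.update_of_ne (by omega)]
    have hV' : x' (c - (k + 1) - 1) = x (c - (k + 1) - 1) := by
      rw [hx', Function.update_of_ne (by omega), Function.update_of_ne (by omega)]
    set U := x (c + (k + 1) + 1)
    set V := x (c - (k + 1) - 1)
    have hF : sumOver N (layers c k) (fun z => blockWt q y c (k + 1) z *
          q ^ ((w : ℤ) * z (c - (k + 1))) *
          chainSum q (fun j => y j * q ^ skew c j z) (k + 1) w) x'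
        = sumOver N (layers c k) (fun z => ∑ d ∈ range (w + 1),
          (y (k + 1) ^ ((u : ℤ) - v + d) * q ^ (-((u : ℤ) * U) + v * (u + U) - V * v + w * v
            - d * w + d * ((v : ℤ) - u - U)) * gbin q U u * gbin q v V * gbin q w d) *
          (blockWt q y c k z * q ^ ((d : ℤ) * z (c - k)) *
            chainSum q (fun j => y j * q ^ skew c j z) k d)) x' := by
      refine sumOver_congr fun z hz _ => ?_
      simp only [mem_layers (show k ≤ c by omega)] at hz
      have e1 : z (c + (k + 1)) = u := by rw [hz _ (by omega), hu']
      have e2 : z (c - (k + 1)) = v := by rw [hz _ (by omega), hv']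
      have e3 : z (c + (k + 1) + 1) = U := by rw [hz _ (by omega), hU']
      have e4 : z (c - (k + 1) - 1) = V := by rw [hz _ (by omega), hV']
      rw [blockWt_succ, chainSum, Finset.mul_sum]
      refine Finset.sum_congr rfl fun d _ => ?_
      have e5 : skew c (k + 1) z = v + z (c - k) - u - U := by
        rw [skew, e1, e2, e3, show c - (k + 1) + 1 = c - k by omega]
      rw [e1, e2, e3, e4, e5, mul_pow, ← zpow_natCast (q ^ _) d, ← zpow_mul,
        zpow_add₀ (hy _), zpow_natCast]
      have e6 : q ^ (-((u : ℤ) * U) + v * (u + U) - V * v) * q ^ ((w : ℤ) * v) *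
          q ^ (-((d : ℤ) * w)) * q ^ (((v : ℤ) + z (c - k) - u - U) * d)
          = q ^ (-((u : ℤ) * U) + v * (u + U) - V * v + w * v
            - d * w + d * ((v : ℤ) - u - U)) * q ^ ((d : ℤ) * z (c - k)) := by
        rw [← zpow_add₀ h0, ← zpow_add₀ h0, ← zpow_add₀ h0, ← zpow_add₀ h0]
        congr 1
        ring
      linear_combination (blockWt q y c k z * y (k + 1) ^ ((u : ℤ) - v) * y (k + 1) ^ d *
        gbin q U u * gbin q v V * gbin q w d *
        chainSum q (fun j => y j * q ^ skew c j z) k d) * e6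
    rw [hF, sumOver_sum]
    refine Finset.sum_congr rfl fun d _ => ?_
    have i1 : x' (c + k + 1) = u := hu'
    have i2 : x' (c - k - 1) = v := hv'
    rw [sumOver_mul_left, ih (by omega) (by rw [i1]; exact mem_range.mp hu), i1, i2, layerWt]
    rcases Nat.lt_or_ge u v with huv | huv
    · rw [centerWt_eq_zero q d huv]
      simp
    · rw [show (u : ℤ) - v + d = ((u + d - v : ℕ) : ℤ) by omega, zpow_natCast]
      ring

/-- The sign attached to the index `i` by the `k`-th layer: `1` if `i ≡ m - k`, `-1` if
`i ≡ m + k (mod 2m)`, and `0` otherwise. -/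
def layerSign (m k i : ℕ) : ℤ :=
  if i % (2 * m) = m - k then 1 else if i % (2 * m) = m + k then -1 else 0

theorem layerSign_add (m k p : ℕ) {r : ℕ} (hr : r < 2 * m) :
    layerSign m k (2 * m * p + r)
      = if r = m - k then 1 else if r = m + k then -1 else 0 := by
  rw [layerSign, Nat.mul_add_mod, Nat.mod_eq_of_lt hr]

theorem layerSign_mul {m k : ℕ} (hk : k < m) (p : ℕ) : layerSign m k (2 * m * p) = 0 := by
  have := layerSign_add m k p (r := 0) (by omega)
  rw [add_zero] at this
  rw [this, if_neg (by omega), if_neg (by omega)]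

theorem sum_layerSign {m k : ℕ} (hk : 1 ≤ k) (hkm : k < m) (p : ℕ) (g : ℕ → ℤ) :
    ∑ i ∈ Ico (2 * m * p) (2 * m * p + 2 * m), layerSign m k i * g i
      = g (2 * m * p + m - k) - g (2 * m * p + m + k) := by
  rw [Finset.sum_Ico_eq_sum_range, show 2 * m * p + 2 * m - 2 * m * p = 2 * m by omega]
  have h : ∀ r ∈ range (2 * m), layerSign m k (2 * m * p + r) * g (2 * m * p + r)
      = (if r = m - k then g (2 * m * p + r) else 0)
        - (if r = m + k then g (2 * m * p + r) else 0) := by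
    intro r hr
    rw [layerSign_add m k p (mem_range.mp hr)]
    by_cases h1 : r = m - k
    · simp [h1, show m - k ≠ m + k by omega]
    · by_cases h2 : r = m + k
      · simp [h2, show m + k ≠ m - k by omega]
      · simp [h1, h2]
  rw [Finset.sum_congr rfl h, Finset.sum_sub_distrib, Finset.sum_ite_eq', Finset.sum_ite_eq',
    if_pos (mem_range.mpr (by omega)), if_pos (mem_range.mpr (by omega)),
    show 2 * m * p + (m - k) = 2 * m * p + m - k by omega,
    show 2 * m * p + (m + k) = 2 * m * p + m + k by omega]

theorem sum_Icc_layerSign_mul {m : ℕ} (i : ℕ) (g : ℕ → ℤ) :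
    ∑ k ∈ Icc 1 (m - 1), layerSign m k i * g k
      = if 1 ≤ i % (2 * m) ∧ i % (2 * m) ≤ m - 1 then g (m - i % (2 * m))
        else if m + 1 ≤ i % (2 * m) ∧ i % (2 * m) ≤ 2 * m - 1 then -g (i % (2 * m) - m)
        else 0 := by
  set r := i % (2 * m) with hr
  have hne : ∀ k k₀ : ℕ, k ∈ Icc 1 (m - 1) → k ≠ k₀ → (r = m - k₀ ∨ r = m + k₀) →
      k₀ < m → layerSign m k i * g k = 0 := by
    intro k k₀ hk hkk h h'
    rw [mem_Icc] at hk
    rw [layerSign, ← hr, if_neg (by omega), if_neg (by omega), zero_mul]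
  split_ifs with h1 h2
  · rw [Finset.sum_eq_single (m - r) (fun k hk hkk => hne k _ hk hkk (by omega) (by omega))
      (fun h => absurd (mem_Icc.mpr (by omega)) h), layerSign, ← hr, if_pos (by omega), one_mul]
  · rw [Finset.sum_eq_single (r - m) (fun k hk hkk => hne k _ hk hkk (by omega) (by omega))
      (fun h => absurd (mem_Icc.mpr (by omega)) h), layerSign, ← hr, if_neg (by omega),
      if_pos (by omega)]
    ring
  · refine Finset.sum_eq_zero fun k hk => ?_
    rw [mem_Icc] at hk
    rw [layerSign, ← hr, if_neg (by omega), if_neg (by omega), zero_mul]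

theorem betLO_eq_sum (m i : ℕ) : betLO m i = ∑ k ∈ Icc 1 (m - 1), layerSign m k i := by
  have := sum_Icc_layerSign_mul (m := m) i (fun _ => 1)
  simp only [mul_one] at this
  rw [this, betLO]

theorem dvd_iff_of_bounds {n a : ℤ} (hn : 0 < n) (h1 : -n < a) (h2 : a < 2 * n) :
    n ∣ a ↔ a = 0 ∨ a = n := by
  constructor
  · rintro ⟨t, rfl⟩
    have : -1 < t := by nlinarith
    have : t < 2 := by nlinarith
    have : t = 0 ∨ t = 1 := by omega
    rcases this with rfl | rfl <;> simp
  · rintro (rfl | rfl) <;> simp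

theorem deltaLO_eq_sum {m i j : ℕ} (hm : 0 < m) (hij : i < j) :
    deltaLO m i j
      = -∑ k ∈ Icc 1 (m - 1), layerSign m k i * (layerSign m k j + layerSign m k (j - 1)) := by
  rw [sum_Icc_layerSign_mul]
  obtain ⟨j, rfl⟩ : ∃ j', j = j' + 1 := ⟨j - 1, by omega⟩
  simp only [Nat.add_sub_cancel]
  obtain ⟨r, a, hr, rfl⟩ : ∃ r a, r < 2 * m ∧ i = 2 * m * a + r :=
    ⟨i % (2 * m), i / (2 * m), Nat.mod_lt _ (by omega), (Nat.div_add_mod _ _).symm⟩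
  obtain ⟨s, b, hs, rfl⟩ : ∃ s b, s < 2 * m ∧ j = 2 * m * b + s :=
    ⟨j % (2 * m), j / (2 * m), Nat.mod_lt _ (by omega), (Nat.div_add_mod _ _).symm⟩
  have hnext : ∀ k, k < m → layerSign m k (2 * m * b + s + 1)
      = if s + 1 = m - k then 1 else if s + 1 = m + k then -1 else 0 := by
    intro k hk
    rcases Nat.lt_or_ge (s + 1) (2 * m) with h | h
    · rw [add_assoc, layerSign_add m k b h]
    · rw [show 2 * m * b + s + 1 = 2 * m * (b + 1) by rw [mul_add]; omega, layerSign_mul hk,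
        if_neg (by omega), if_neg (by omega)]
  have hmod : (2 * m * a + r) % (2 * m) = r := by
    rw [Nat.mul_add_mod, Nat.mod_eq_of_lt hr]
  rw [hmod]
  have hdvd : ∀ (t : ℤ) (x y : ℤ), x = 2 * (m : ℤ) * t + y → (2 * (m : ℤ) ∣ x ↔ 2 * (m : ℤ) ∣ y) :=
    fun t x y h => by rw [h]; exact (Int.dvd_add_right (Dvd.intro _ rfl))
  have hm' : (0 : ℤ) < 2 * (m : ℤ) := by omega
  have d1 : 2 * m ∣ 2 * m * a + r + (2 * m * b + s + 1) ↔ r + s + 1 = 2 * m := by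
    rw [← Int.natCast_dvd_natCast]
    push_cast
    rw [hdvd (a + b) _ ((r : ℤ) + s + 1 - 0) (by ring),
      dvd_iff_of_bounds hm' (by omega) (by omega)]
    omega
  have d2 : 2 * m ∣ 2 * m * a + r + (2 * m * b + s + 1) - 1 ↔ (r + s = 0 ∨ r + s = 2 * m) := by
    rw [show 2 * m * a + r + (2 * m * b + s + 1) - 1 = 2 * m * a + r + (2 * m * b + s) by omega,
      ← Int.natCast_dvd_natCast]
    push_cast
    rw [hdvd (a + b) _ ((r : ℤ) + s) (by ring), dvd_iff_of_bounds hm' (by omega) (by omega)]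
    omega
  have d3 : 2 * (m : ℤ) ∣ ((2 * m * b + s + 1 : ℕ) : ℤ) - ((2 * m * a + r : ℕ) : ℤ)
      ↔ (s + 1 = r ∨ s + 1 = r + 2 * m) := by
    rw [hdvd (b - a) _ ((s : ℤ) + 1 - r) (by push_cast; ring),
      dvd_iff_of_bounds hm' (by omega) (by omega)]
    omega
  have d4 : 2 * (m : ℤ) ∣ ((2 * m * b + s + 1 : ℕ) : ℤ) - ((2 * m * a + r : ℕ) : ℤ) - 1
      ↔ s = r := by
    rw [hdvd (b - a) _ ((s : ℤ) - r) (by push_cast; ring),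
      dvd_iff_of_bounds hm' (by omega) (by omega)]
    omega
  have d5 : m ∣ 2 * m * a + r ↔ (r = 0 ∨ r = m) := by
    rw [Nat.dvd_add_right (Dvd.intro (2 * a) (by ring))]
    constructor
    · rintro ⟨t, rfl⟩
      have : t < 2 := by nlinarith
      interval_cases t <;> simp
    · rintro (rfl | rfl) <;> simp
  rw [deltaLO]
  simp only [d1, d2, d3, d4, d5]
  rcases lt_trichotomy r m with h | h | h
  · rcases Nat.eq_zero_or_pos r with h' | h'
    · rw [if_pos (Or.inl h'), if_neg (by omega), if_neg (by omega), neg_zero]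
    · rw [if_neg (by omega), if_pos (show 1 ≤ r ∧ r ≤ m - 1 by omega), hnext _ (by omega),
        layerSign_add _ _ _ hs]
      split_ifs <;> first | rfl | omega
  · rw [if_pos (Or.inr h), if_neg (by omega), if_neg (by omega), neg_zero]
  · rw [if_neg (by omega), if_neg (show ¬ (1 ≤ r ∧ r ≤ m - 1) by omega),
      if_pos (show m + 1 ≤ r ∧ r ≤ 2 * m - 1 by omega), hnext _ (by omega),
      layerSign_add _ _ _ hs]
    split_ifs <;> first | rfl | omega

/-- Minus the signed sum of the coordinates below `j` in the `k`-th layer. -/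
def layerSum (m k j : ℕ) (x : ℕ → ℕ) : ℤ := -∑ i ∈ range j, layerSign m k i * x i

theorem layerSum_add {m k : ℕ} (hk : 1 ≤ k) (hkm : k < m) (p : ℕ) (x : ℕ → ℕ) {r : ℕ}
    (hr : r ≤ 2 * m) :
    layerSum m k (2 * m * p + r) x = layerSum m k (2 * m * p) x
      - (if m - k < r then (x (2 * m * p + m - k) : ℤ) else 0)
      + (if m + k < r then (x (2 * m * p + m + k) : ℤ) else 0) := by
  have h := sum_layerSign hk hkm p (fun i => if i < 2 * m * p + r then (x i : ℤ) else 0)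
  have h' : ∑ i ∈ Ico (2 * m * p) (2 * m * p + 2 * m),
      layerSign m k i * (if i < 2 * m * p + r then (x i : ℤ) else 0)
      = ∑ i ∈ Ico (2 * m * p) (2 * m * p + r), layerSign m k i * x i := by
    rw [← Finset.sum_Ico_consecutive _ (show 2 * m * p ≤ 2 * m * p + r by omega)
      (show 2 * m * p + r ≤ 2 * m * p + 2 * m by omega)]
    rw [Finset.sum_eq_zero (s := Ico (2 * m * p + r) _), add_zero]
    · refine Finset.sum_congr rfl fun i hi => ?_
      rw [if_pos (mem_Ico.mp hi).2]
    · intro i hi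
      rw [if_neg (not_lt.mpr (mem_Ico.mp hi).1), mul_zero]
  rw [h'] at h
  have i1 : (2 * m * p + m - k < 2 * m * p + r) ↔ m - k < r := by omega
  have i2 : (2 * m * p + m + k < 2 * m * p + r) ↔ m + k < r := by omega
  simp only [i1, i2] at h
  rw [layerSum, ← Finset.sum_range_add_sum_Ico _ (show 2 * m * p ≤ 2 * m * p + r by omega), h,
    layerSum]
  ring

/-- The quadratic form in the exponent of the multiple sum. -/
def quad (m P : ℕ) (x : ℕ → ℕ) : ℤ :=
  ∑ k ∈ Icc 1 (m - 1), ∑ i ∈ range P,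
    layerSign m k i * (x i * layerSum m k i x + x (i + 1) * layerSum m k (i + 1) x)

theorem quad_succ (m p : ℕ) (x : ℕ → ℕ) :
    quad m (2 * m * (p + 1)) x = quad m (2 * m * p) x
      + ∑ k ∈ Icc 1 (m - 1), (layerSum m k (2 * m * p) x * skew (2 * m * p + m) k x
        + (-((x (2 * m * p + m - k + 1) : ℤ) * x (2 * m * p + m - k))
          + x (2 * m * p + m - k) * ((x (2 * m * p + m + k) : ℤ) + x (2 * m * p + m + k + 1))
          - x (2 * m * p + m + k) * x (2 * m * p + m + k + 1))) := by
  rw [quad, quad, ← Finset.sum_add_distrib]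
  refine Finset.sum_congr rfl fun k hk => ?_
  obtain ⟨h1, h2⟩ := mem_Icc.mp hk
  have hkm : k < m := by omega
  rw [show 2 * m * (p + 1) = 2 * m * p + 2 * m by ring,
    ← Finset.sum_range_add_sum_Ico _ (show 2 * m * p ≤ 2 * m * p + 2 * m by omega),
    sum_layerSign h1 hkm]
  have e1 := layerSum_add h1 hkm p x (r := m - k) (by omega)
  have e2 := layerSum_add h1 hkm p x (r := m - k + 1) (by omega)
  have e3 := layerSum_add h1 hkm p x (r := m + k) (by omega)
  have e4 := layerSum_add h1 hkm p x (r := m + k + 1) (by omega)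
  rw [if_neg (by omega), if_neg (by omega),
    show 2 * m * p + (m - k) = 2 * m * p + m - k by omega] at e1
  rw [if_pos (by omega), if_neg (by omega),
    show 2 * m * p + (m - k + 1) = 2 * m * p + m - k + 1 by omega] at e2
  rw [if_pos (by omega), if_neg (by omega),
    show 2 * m * p + (m + k) = 2 * m * p + m + k by omega] at e3
  rw [if_pos (by omega), if_pos (by omega),
    show 2 * m * p + (m + k + 1) = 2 * m * p + m + k + 1 by omega] at e4
  rw [e1, e2, e3, e4, skew]
  ring

theorem layerSum_succ {m k : ℕ} (hk : 1 ≤ k) (hkm : k < m) (p : ℕ) (x : ℕ → ℕ) :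
    layerSum m k (2 * m * (p + 1)) x = layerSum m k (2 * m * p) x
      + ((x (2 * m * p + m + k) : ℤ) - x (2 * m * p + m - k)) := by
  rw [show 2 * m * (p + 1) = 2 * m * p + 2 * m by ring, layerSum_add hk hkm p x le_rfl,
    if_pos (by omega), if_pos (by omega)]
  ring

theorem blockWt_mul_zpow {q : ℂ} (h0 : q ≠ 0) (y : ℕ → ℂ) {c r : ℕ} (hr : r < c) (z : ℕ → ℕ) :
    blockWt q y c r z * q ^ ((z (c - r - 1) : ℤ) * z (c - r))
      = sgnTri q (z c) * (∏ i ∈ Ico (c - r - 1) (c + r + 1), gbin q (z (i + 1)) (z i)) *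
        (∏ j ∈ Icc 1 r, y j ^ ((z (c + j) : ℤ) - z (c - j))) *
        q ^ ∑ j ∈ Icc 1 r, (-((z (c - j + 1) : ℤ) * z (c - j))
          + z (c - j) * ((z (c + j) : ℤ) + z (c + j + 1)) - z (c + j) * z (c + j + 1)) := by
  induction r with
  | zero =>
    rw [blockWt]
    simp only [Nat.sub_zero, add_zero, show Icc 1 0 = (∅ : Finset ℕ) from rfl, prod_empty,
      sum_empty, zpow_zero, mul_one]
    obtain ⟨c, rfl⟩ : ∃ c', c = c' + 1 := ⟨c - 1, by omega⟩
    simp only [Nat.add_sub_cancel]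
    rw [Finset.prod_Ico_succ_top (by omega), Finset.prod_Ico_succ_top (by omega)]
    simp only [Ico_self, prod_empty, one_mul]
    rw [zpow_neg]
    have := zpow_ne_zero ((z c : ℤ) * z (c + 1)) h0
    field_simp
  | succ r ih =>
    specialize ih (by omega)
    rw [blockWt_succ, Finset.prod_Icc_succ_top (by omega), Finset.sum_Icc_succ_top (by omega),
      zpow_add₀ h0]
    obtain ⟨d, rfl⟩ : ∃ d, c = d + r + 2 := ⟨c - r - 2, by omega⟩
    have e1 : d + r + 2 - (r + 1) - 1 = d := by omega
    have e2 : d + r + 2 - (r + 1) = d + 1 := by omega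
    have e3 : d + r + 2 - r - 1 = d + 1 := by omega
    have e4 : d + r + 2 - r = d + 2 := by omega
    rw [e3, e4] at ih
    rw [e1, e2, Finset.prod_eq_prod_Ico_succ_bot (by omega), Finset.prod_Ico_succ_top (by omega)]
    set A := blockWt q y (d + r + 2) r z
    set S := ∑ j ∈ Icc 1 r, (-((z (d + r + 2 - j + 1) : ℤ) * z (d + r + 2 - j))
          + z (d + r + 2 - j) * ((z (d + r + 2 + j) : ℤ) + z (d + r + 2 + j + 1))
          - z (d + r + 2 + j) * z (d + r + 2 + j + 1))
    have hA : A = A * q ^ ((z (d + 1) : ℤ) * z (d + 2)) * q ^ (-((z (d + 1) : ℤ) * z (d + 2))) := by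
      rw [mul_assoc, ← zpow_add₀ h0]; simp
    rw [hA, ih]
    have e5 : q ^ (-((z (d + 1) : ℤ) * z (d + 2))) *
        q ^ (-((z (d + r + 2 + (r + 1)) : ℤ) * z (d + r + 2 + (r + 1) + 1))
          + z (d + 1) * ((z (d + r + 2 + (r + 1)) : ℤ) + z (d + r + 2 + (r + 1) + 1))
          - z d * z (d + 1)) * q ^ ((z d : ℤ) * z (d + 1))
        = q ^ (-((z (d + 1 + 1) : ℤ) * z (d + 1))
          + z (d + 1) * ((z (d + r + 2 + (r + 1)) : ℤ) + z (d + r + 2 + (r + 1) + 1))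
          - z (d + r + 2 + (r + 1)) * z (d + r + 2 + (r + 1) + 1)) := by
      rw [← zpow_add₀ h0, ← zpow_add₀ h0]
      congr 1
      rw [show d + 1 + 1 = d + 2 from rfl]
      ring
    rw [← e5, show d + r + 2 + r + 1 = d + r + 2 + (r + 1) by omega]
    ring

/-- The summand of the multiple sum with `p` blocks, with a weight `y k` on the `k`-th layers. -/
def towerWt (q : ℂ) (m p : ℕ) (y : ℕ → ℂ) (x : ℕ → ℕ) : ℂ :=
  (if x 0 = 0 then 1 else 0) * q ^ quad m (2 * m * p) x *
    (∏ i ∈ range (2 * p), sgnTri q (x (m * i))) *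
    (∏ i ∈ range (2 * m * p), gbin q (x (i + 1)) (x i)) *
    ∏ k ∈ Icc 1 (m - 1), y k ^ layerSum m k (2 * m * p) x

theorem zpow_sum {q : ℂ} (h0 : q ≠ 0) {ι : Type*} (s : Finset ι) (f : ι → ℤ) :
    q ^ ∑ i ∈ s, f i = ∏ i ∈ s, q ^ f i := by
  classical
  induction s using Finset.induction_on with
  | empty => simp
  | insert a s ha ih => rw [Finset.sum_insert ha, Finset.prod_insert ha, zpow_add₀ h0, ih]

theorem towerWt_succ {q : ℂ} (h0 : q ≠ 0) {m : ℕ} (hm : 0 < m) (p : ℕ) {y : ℕ → ℂ}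
    (hy : ∀ j, y j ≠ 0) (z : ℕ → ℕ) :
    towerWt q m (p + 1) y z = sgnTri q (z (2 * m * p)) *
      (blockWt q y (2 * m * p + m) (m - 1) z *
        q ^ ((z (2 * m * p) : ℤ) * z (2 * m * p + m - (m - 1)))) *
      towerWt q m p (fun k => y k * q ^ skew (2 * m * p + m) k z) z := by
  have hb := blockWt_mul_zpow h0 y (show m - 1 < 2 * m * p + m by omega) z
  rw [show 2 * m * p + m - (m - 1) - 1 = 2 * m * p by omega,
    show 2 * m * p + m + (m - 1) + 1 = 2 * m * (p + 1) by rw [mul_add]; omega] at hb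
  rw [hb, towerWt, towerWt, quad_succ, zpow_add₀ h0, Finset.sum_add_distrib, zpow_add₀ h0,
    ← Finset.prod_range_mul_prod_Ico _ (show 2 * m * p ≤ 2 * m * (p + 1) by rw [mul_add]; omega),
    show 2 * (p + 1) = 2 * p + 1 + 1 by ring, Finset.prod_range_succ, Finset.prod_range_succ,
    show m * (2 * p) = 2 * m * p by ring, show m * (2 * p + 1) = 2 * m * p + m by ring]
  have h1 : ∏ k ∈ Icc 1 (m - 1), y k ^ layerSum m k (2 * m * (p + 1)) z
      = (∏ k ∈ Icc 1 (m - 1), y k ^ layerSum m k (2 * m * p) z) *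
        ∏ k ∈ Icc 1 (m - 1), y k ^ ((z (2 * m * p + m + k) : ℤ) - z (2 * m * p + m - k)) := by
    rw [← Finset.prod_mul_distrib]
    refine Finset.prod_congr rfl fun k hk => ?_
    obtain ⟨h1, h2⟩ := mem_Icc.mp hk
    rw [layerSum_succ h1 (by omega), zpow_add₀ (hy k)]
  have h2 : ∏ k ∈ Icc 1 (m - 1),
        (y k * q ^ skew (2 * m * p + m) k z) ^ layerSum m k (2 * m * p) z
      = (∏ k ∈ Icc 1 (m - 1), y k ^ layerSum m k (2 * m * p) z) *
        q ^ ∑ k ∈ Icc 1 (m - 1), layerSum m k (2 * m * p) z * skew (2 * m * p + m) k z := by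
    rw [zpow_sum h0, ← Finset.prod_mul_distrib]
    refine Finset.prod_congr rfl fun k _ => ?_
    rw [mul_zpow, ← zpow_mul, mul_comm (skew _ _ _)]
  rw [h1, h2]
  ring

theorem towerWt_congr (q : ℂ) {m : ℕ} (p : ℕ) {y y' : ℕ → ℂ} (x : ℕ → ℕ)
    (h : ∀ k ∈ Icc 1 (m - 1), y k = y' k) : towerWt q m p y x = towerWt q m p y' x := by
  rw [towerWt, towerWt]
  congr 1
  exact Finset.prod_congr rfl fun k hk => by rw [h k hk]

theorem skew_congr {c k : ℕ} {z z' : ℕ → ℕ} (h : ∀ i, c - k ≤ i → z i = z' i) :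
    skew c k z = skew c k z' := by
  rw [skew, skew, h _ le_rfl, h (c - k + 1) (by omega), h (c + k) (by omega),
    h (c + k + 1) (by omega)]

theorem blockWt_congr (q : ℂ) (y : ℕ → ℂ) {c r : ℕ} {z z' : ℕ → ℕ}
    (h : ∀ i, c - r - 1 ≤ i → z i = z' i) : blockWt q y c r z = blockWt q y c r z' := by
  rw [blockWt, blockWt, h c (by omega), h (c + 1) (by omega), h (c - 1) (by omega)]
  congr 1
  refine Finset.prod_congr rfl fun j hj => ?_
  obtain ⟨h1, h2⟩ := mem_Icc.mp hj
  rw [h (c + j) (by omega), h (c - j) (by omega), h (c + j + 1) (by omega),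
    h (c - j - 1) (by omega)]

/-- The indices `0, …, 2mp - 1`, listed block by block from the top. -/
def blocks (m : ℕ) : ℕ → List ℕ
  | 0 => []
  | p + 1 => (2 * m * p) :: (layers (2 * m * p + m) (m - 1) ++ blocks m p)

theorem mem_blocks {m : ℕ} (hm : 0 < m) {p i : ℕ} : i ∈ blocks m p ↔ i < 2 * m * p := by
  induction p with
  | zero => simp [blocks]
  | succ p ih =>
    rw [blocks, List.mem_cons, List.mem_append, mem_layers (by omega), ih, mul_add]
    omega

theorem nodup_blocks {m : ℕ} (hm : 0 < m) (p : ℕ) : (blocks m p).Nodup := by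
  induction p with
  | zero => simp [blocks]
  | succ p ih =>
    rw [blocks, List.nodup_cons, List.mem_append, mem_layers (by omega), mem_blocks hm,
      List.nodup_append']
    refine ⟨by omega, nodup_layers (by omega), ih, fun i hi hi' => ?_⟩
    rw [mem_layers (by omega)] at hi
    rw [mem_blocks hm] at hi'
    omega

/-- The multiple sum `∑ ∏_j q^{s_j² + s_j} [s_{j+1}; s_j]` over chains of length `p` below `n`
ending at `0`. -/
def vSum (q : ℂ) : ℕ → ℕ → ℂ
  | 0, n => if n = 0 then 1 else 0
  | p + 1, n => ∑ t ∈ range (n + 1), q ^ (t ^ 2 + t) * gbin q n t * vSum q p t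

theorem chainSum_zero_right (q : ℂ) (y : ℕ → ℂ) (k : ℕ) : chainSum q y k 0 = 1 := by
  induction k with
  | zero => rfl
  | succ k ih => simp [chainSum, ih, gbin_zero_right]

theorem sgnTri_mul_centerWt {q : ℂ} (h0 : q ≠ 0) {n t : ℕ} (h : t ≤ n) :
    sgnTri q t * qPoch q q t * centerWt q n t t = qPoch q q n * (q ^ (t ^ 2 + t) * gbin q n t) := by
  have h1 : sgnTri q t * sgnTri q t = q ^ (t ^ 2 + t) := by
    rw [sgnTri, mul_mul_mul_comm, ← zpow_add₀ h0, tri_add_tri, ← mul_pow]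
    norm_num
    exact_mod_cast rfl
  have h2 := qPoch_add q t (n - t)
  rw [show t + (n - t) = n by omega] at h2
  rw [centerWt, h2, ← h1]
  simp only [sub_self, zero_mul, zpow_zero]
  ring

/-- Evaluation of the multiple sum by summing out the blocks one at a time. -/
theorem sum_towerWt {q : ℂ} (h0 : q ≠ 0) (hq : ∀ k : ℕ, q ^ (k + 1) ≠ 1) {N m : ℕ} (hm : 0 < m)
    (p : ℕ) {y : ℕ → ℂ} (hy : ∀ j, y j ≠ 0) {x : ℕ → ℕ} (hx : x (2 * m * p) < N) :
    sumOver N (blocks m p) (towerWt q m p y) x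
      = qPoch q q (x (2 * m * p)) * vSum q p (x (2 * m * p)) *
        chainSum q y (m - 1) (x (2 * m * p)) := by
  induction p generalizing y x with
  | zero =>
    simp only [blocks, sumOver, towerWt, mul_zero, vSum, range_zero, prod_empty, mul_one, quad,
      layerSum, sum_empty, sum_const_zero, zpow_zero, neg_zero, prod_const_one]
    split_ifs with h
    · rw [h, qPoch_zero, chainSum_zero_right]; simp
    · simp
  | succ p ih =>
    set c := 2 * m * p + m with hc
    set n := x (2 * m * (p + 1)) with hn
    have hPc : 2 * m * (p + 1) = c + (m - 1) + 1 := by rw [mul_add]; omega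
    simp only [blocks, sumOver]
    have hstep : ∀ t ∈ range N, sumOver N (layers c (m - 1) ++ blocks m p) (towerWt q m (p + 1) y)
        (Function.update x (2 * m * p) t)
        = sgnTri q t * qPoch q q t * vSum q p t *
          (centerWt q n t t * chainSum q y (m - 1) (n + t - t)) := by
      intro t ht
      set x' := Function.update x (2 * m * p) t with hx'
      have ht' : x' (2 * m * p) = t := by rw [hx', Function.update_self]
      have hn' : x' (c + (m - 1) + 1) = n := by
        rw [hx', Function.update_of_ne (by omega), hn, hPc]
      have hcm : c - (m - 1) - 1 = 2 * m * p := by omega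
      have hb := sum_block h0 hq hy (show m - 1 < c by omega) (x := x')
        (by rw [hn']; exact hx) t
      rw [hn', hcm, ht'] at hb
      rw [sumOver_append, ← hb, ← sumOver_mul_left]
      refine sumOver_congr fun z hz _ => ?_
      have hzt : z (2 * m * p) = t := by
        rw [hz _ (by rw [mem_layers (by omega)]; omega), ht']
      have hin : sumOver N (blocks m p) (towerWt q m (p + 1) y) z
          = sumOver N (blocks m p) (fun w => (sgnTri q t *
            (blockWt q y c (m - 1) z * q ^ ((t : ℤ) * z (c - (m - 1))))) *
            towerWt q m p (fun k => y k * q ^ skew c k z) w) z := by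
        refine sumOver_congr fun w hw _ => ?_
        have hw' : ∀ i, 2 * m * p ≤ i → w i = z i := fun i hi =>
          hw i (by rw [mem_blocks hm]; omega)
        rw [towerWt_succ h0 hm p hy, hw' _ le_rfl, hzt, hw' (2 * m * p + m - (m - 1)) (by omega),
          blockWt_congr q y (z := w) (z' := z) fun i hi => hw' i (by omega)]
        congr 1
        refine towerWt_congr q p w fun k hk => ?_
        obtain ⟨h1, h2⟩ := mem_Icc.mp hk
        rw [skew_congr fun i hi => hw' i (by omega)]
      rw [hin, sumOver_mul_left, ih (fun j => mul_ne_zero (hy j) (zpow_ne_zero _ h0))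
        (by rw [hzt]; exact mem_range.mp ht), hzt]
      ring
    rw [Finset.sum_congr rfl hstep, vSum, Finset.mul_sum, Finset.sum_mul,
      ← Finset.sum_range_add_sum_Ico _ (show n + 1 ≤ N from hx),
      Finset.sum_eq_zero (s := Ico (n + 1) N), add_zero]
    · refine Finset.sum_congr rfl fun t ht => ?_
      rw [Nat.add_sub_cancel]
      linear_combination (vSum q p t * chainSum q y (m - 1) n) *
        sgnTri_mul_centerWt h0 (show t ≤ n by have := mem_range.mp ht; omega)
    · intro t ht
      rw [centerWt_eq_zero q t (show n < t by have := mem_Ico.mp ht; omega)]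
      simp

theorem sum_deltaLO {m : ℕ} (hm : 0 < m) (p : ℕ) (x : ℕ → ℕ) :
    ∑ i ∈ (Icc 1 (2 * m * p)).filter (fun i => ¬ m ∣ i), ∑ j ∈ Icc (i + 1) (2 * m * p),
      deltaLO m i j * (x i : ℤ) * (x j : ℤ) = quad m (2 * m * p) x := by
  have hdvd : ∀ i j, m ∣ i → deltaLO m i j = 0 := fun i j h => by rw [deltaLO, if_pos h]
  have hzero : ∀ k ∈ Icc 1 (m - 1), k < m := fun k hk => by have := mem_Icc.mp hk; omega
  rw [Finset.sum_filter_of_ne]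
  swap
  · intro i _ hne h
    exact hne (Finset.sum_eq_zero fun j _ => by rw [hdvd i j h]; ring)
  have h1 : ∑ i ∈ Icc 1 (2 * m * p), ∑ j ∈ Icc (i + 1) (2 * m * p),
        deltaLO m i j * (x i : ℤ) * (x j : ℤ)
      = ∑ j ∈ range (2 * m * p), ∑ i ∈ range (j + 1),
        deltaLO m i (j + 1) * (x i : ℤ) * (x (j + 1) : ℤ) := by
    rw [Finset.sum_comm' (t' := Icc 1 (2 * m * p)) (s' := fun j => Ico 1 j)
      (by intro i j; simp only [mem_Icc, mem_Ico]; omega),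
      show Icc 1 (2 * m * p) = Ico 1 (2 * m * p + 1) from rfl, Finset.sum_Ico_eq_sum_range,
      Nat.add_sub_cancel]
    refine Finset.sum_congr rfl fun j _ => ?_
    rw [add_comm 1 j, Finset.sum_range_eq_add_Ico _ (by omega), hdvd 0 _ (dvd_zero m)]
    ring
  have h2 : ∀ j ∈ range (2 * m * p), ∑ i ∈ range (j + 1),
        deltaLO m i (j + 1) * (x i : ℤ) * (x (j + 1) : ℤ)
      = ∑ k ∈ Icc 1 (m - 1), (layerSign m k (j + 1) * (x (j + 1) * layerSum m k (j + 1) x)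
        + layerSign m k j * (x (j + 1) * layerSum m k (j + 1) x)) := by
    intro j _
    have h3 : ∀ k ∈ Icc 1 (m - 1),
        layerSign m k (j + 1) * (x (j + 1) * layerSum m k (j + 1) x)
        + layerSign m k j * (x (j + 1) * layerSum m k (j + 1) x)
        = ∑ i ∈ range (j + 1), -(layerSign m k i * (layerSign m k (j + 1) + layerSign m k j) *
          (x i * x (j + 1))) := by
      intro k _
      rw [layerSum, ← add_mul, ← Finset.sum_neg_distrib, Finset.mul_sum, Finset.mul_sum]
      exact Finset.sum_congr rfl fun i _ => by ring
    rw [Finset.sum_congr rfl h3, Finset.sum_comm]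
    refine Finset.sum_congr rfl fun i hi => ?_
    rw [deltaLO_eq_sum hm (mem_range.mp hi), Nat.add_sub_cancel, mul_assoc, neg_mul,
      Finset.sum_mul, Finset.sum_neg_distrib]
  rw [h1, Finset.sum_congr rfl h2, Finset.sum_comm, quad]
  refine Finset.sum_congr rfl fun k hk => ?_
  have h4 := Finset.sum_range_succ
    (fun j => layerSign m k j * (x j * layerSum m k j x)) (2 * m * p)
  have h0 : layerSign m k 0 = 0 := by simpa using layerSign_mul (hzero k hk) 0
  rw [Finset.sum_range_succ', layerSign_mul (hzero k hk), h0, zero_mul, add_zero, zero_mul,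
    add_zero] at h4
  rw [Finset.sum_add_distrib, h4, ← Finset.sum_add_distrib]
  exact Finset.sum_congr rfl fun j _ => by ring

/-- The part of the summand of `𝓕` depending on all the indices equals `towerWt`. -/
theorem prod_eq_towerWt {q : ℂ} (h0 : q ≠ 0) {m p : ℕ} (hm : 0 < m) (hp : 0 < p) {x : ℕ → ℕ}
    (hx : x 0 = 0) :
    (∏ i ∈ (Icc 1 (2 * m * p)).filter (fun i => ¬ m ∣ i), ∏ j ∈ Icc (i + 1) (2 * m * p),
        q ^ (deltaLO m i j * (x i : ℤ) * (x j : ℤ))) *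
      (∏ i ∈ Icc 1 (2 * p - 1), sgnTri q (x (m * i))) *
      (∏ i ∈ Icc 1 (2 * m * p - 1), q ^ (betLO m i * (x i : ℤ)) * gbin q (x (i + 1)) (x i))
      = towerWt q m p (fun _ => q⁻¹) x := by
  have hmp : 0 < m * p := Nat.mul_pos hm hp
  have hP : 0 < 2 * m * p := by rw [mul_assoc]; omega
  have hI : ∀ n, 0 < n → Icc 1 (n - 1) = Ico 1 n := fun n hn => by
    ext i; simp only [mem_Icc, mem_Ico]; omega
  have hquad : ∏ i ∈ (Icc 1 (2 * m * p)).filter (fun i => ¬ m ∣ i), ∏ j ∈ Icc (i + 1) (2 * m * p),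
        q ^ (deltaLO m i j * (x i : ℤ) * (x j : ℤ)) = q ^ quad m (2 * m * p) x := by
    rw [← sum_deltaLO hm, zpow_sum h0]
    exact Finset.prod_congr rfl fun i _ => (zpow_sum h0 _ _).symm
  have hlin : ∏ i ∈ Icc 1 (2 * m * p - 1), q ^ (betLO m i * (x i : ℤ))
      = ∏ k ∈ Icc 1 (m - 1), q⁻¹ ^ layerSum m k (2 * m * p) x := by
    have e : ∏ i ∈ Icc 1 (2 * m * p - 1), q ^ (betLO m i * (x i : ℤ))
        = q ^ ∑ i ∈ range (2 * m * p), betLO m i * (x i : ℤ) := by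
      rw [zpow_sum h0, Finset.prod_range_eq_mul_Ico _ hP, hx, hI _ hP]
      simp
    simp only [inv_zpow', layerSum, neg_neg]
    rw [e, ← zpow_sum h0, Finset.sum_comm]
    congr 1
    refine Finset.sum_congr rfl fun i _ => ?_
    rw [betLO_eq_sum, Finset.sum_mul]
  rw [hquad, Finset.prod_mul_distrib, hlin, towerWt, if_pos hx,
    Finset.prod_range_eq_mul_Ico _ hP, Finset.prod_range_eq_mul_Ico _ (show 0 < 2 * p by omega),
    mul_zero, hx, gbin_zero_right, hI _ hP, hI _ (show 0 < 2 * p by omega)]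
  simp only [sgnTri, tri_zero, pow_zero, zpow_zero]
  ring

/-- The list `P, P - 1, …, 1`. -/
def down : ℕ → List ℕ
  | 0 => []
  | P + 1 => (P + 1) :: down P

theorem mem_down {P i : ℕ} : i ∈ down P ↔ 1 ≤ i ∧ i ≤ P := by
  induction P with
  | zero => simp [down]; omega
  | succ P ih => rw [down, List.mem_cons, ih]; omega

theorem nodup_down (P : ℕ) : (down P).Nodup := by
  induction P with
  | zero => simp [down]
  | succ P ih => rw [down, List.nodup_cons, mem_down]; exact ⟨by omega, ih⟩

/-- Replace the coordinates `1, …, P` of `x` by the entries of `f`. -/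
def patch {N : ℕ} (P : ℕ) (f : Fin P → Fin N) (x : ℕ → ℕ) : ℕ → ℕ :=
  fun i => if h : 1 ≤ i ∧ i ≤ P then (f ⟨i - 1, by omega⟩ : ℕ) else x i

theorem patch_snoc {N P : ℕ} (g : Fin P → Fin N) (c : Fin N) (x : ℕ → ℕ) :
    patch (P + 1) (Fin.snoc g c : Fin (P + 1) → Fin N) x
      = patch P g (Function.update x (P + 1) c) := by
  funext i
  rw [patch, patch]
  rcases lt_trichotomy i (P + 1) with h | h | h
  · by_cases h1 : 1 ≤ i
    · rw [dif_pos (by omega), dif_pos (by omega)]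
      simp [Fin.snoc, show i - 1 < P by omega]
    · rw [dif_neg (by omega), dif_neg (by omega), Function.update_of_ne (by omega)]
  · subst h
    rw [dif_pos (by omega), dif_neg (by omega), Function.update_self]
    simp [Fin.snoc]
  · rw [dif_neg (by omega), dif_neg (by omega), Function.update_of_ne (by omega)]

theorem sum_patch (N P : ℕ) (F : (ℕ → ℕ) → ℂ) (x : ℕ → ℕ) :
    ∑ f : Fin P → Fin N, F (patch P f x) = sumOver N (down P) F x := by
  induction P generalizing x with
  | zero =>
    rw [Fintype.sum_unique]
    refine congrArg F (funext fun i => ?_)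
    rw [patch, dif_neg (by omega)]
  | succ P ih =>
    rw [← (Fin.snocEquiv (fun _ : Fin (P + 1) => Fin N)).sum_comp, Fintype.sum_prod_type, down,
      sumOver, Finset.sum_range]
    refine Finset.sum_congr rfl fun c _ => ?_
    rw [← ih]
    refine Finset.sum_congr rfl fun g _ => ?_
    rw [← patch_snoc]
    rfl

theorem sum_extTup (N P : ℕ) (F : (ℕ → ℕ) → ℂ) :
    ∑ f : Fin P → Fin N, F (extTup P N f) = sumOver N (down P) F fun _ => 0 :=
  sum_patch N P F _

theorem monotone_of_extTup {P N : ℕ} (f : Fin P → Fin N)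
    (h : ∀ i ∈ Icc 1 (P - 1), extTup P N f i ≤ extTup P N f (i + 1)) :
    ∀ i j, i ≤ j → f i ≤ f j := by
  have key : ∀ d a, 1 ≤ a → a + d ≤ P → extTup P N f a ≤ extTup P N f (a + d) := by
    intro d
    induction d with
    | zero => exact fun a _ _ => le_rfl
    | succ d ih =>
      intro a h1 h2
      exact (ih a h1 (by omega)).trans (h (a + d) (mem_Icc.mpr (by omega)))
  intro i j hij
  have hij' : (i : ℕ) ≤ j := hij
  have e : ∀ i : Fin P, extTup P N f (i + 1) = f i := fun i => by
    rw [extTup, dif_pos (by omega)]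
    simp
  have := key (j - i) (i + 1) (by omega) (by omega)
  rw [show (i : ℕ) + 1 + (j - i) = j + 1 by omega, e, e] at this
  exact this

theorem extTup_le_of_prod_ne_zero {q : ℂ} {P : ℕ} {x : ℕ → ℕ} {g : ℕ → ℂ}
    (h : ∏ i ∈ Icc 1 (P - 1), g i * gbin q (x (i + 1)) (x i) ≠ 0) :
    ∀ i ∈ Icc 1 (P - 1), x i ≤ x (i + 1) := by
  intro i hi
  by_contra hlt
  refine h (Finset.prod_eq_zero hi ?_)
  rw [gbin_eq_zero q (by omega), mul_zero]

/-- A multiple sum over chains satisfies the obvious recursion. -/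
theorem sumOver_chain {N : ℕ} {g K : ℕ → ℕ → ℂ} (hg : ∀ w d, w < d → g w d = 0)
    (hK0 : ∀ w, K 0 w = 1) (hK : ∀ k w, K (k + 1) w = ∑ d ∈ range (w + 1), g w d * K k d)
    (k : ℕ) {x : ℕ → ℕ} (hx : x (k + 1) < N) :
    sumOver N (down k) (fun z => ∏ i ∈ Icc 1 k, g (z (i + 1)) (z i)) x = K k (x (k + 1)) := by
  induction k generalizing x with
  | zero => rw [hK0]; simp [down, sumOver]
  | succ k ih =>
    rw [down, sumOver, hK]
    have hstep : ∀ d ∈ range N, sumOver N (down k)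
        (fun z => ∏ i ∈ Icc 1 (k + 1), g (z (i + 1)) (z i)) (Function.update x (k + 1) d)
        = g (x (k + 1 + 1)) d * K k d := by
      intro d hd
      have hd' : Function.update x (k + 1) d (k + 1) = d := Function.update_self ..
      have hx' := ih (x := Function.update x (k + 1) d) (by rw [hd']; exact mem_range.mp hd)
      rw [hd'] at hx'
      rw [← hx', ← sumOver_mul_left]
      refine sumOver_congr fun z hz _ => ?_
      rw [Finset.prod_Icc_succ_top (by omega), mul_comm, hz (k + 1) (by rw [mem_down]; omega),
        hz (k + 1 + 1) (by rw [mem_down]; omega), hd', Function.update_of_ne (by omega)]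
    rw [Finset.sum_congr rfl hstep, ← Finset.sum_range_add_sum_Ico _ (Nat.succ_le_of_lt hx),
      Finset.sum_eq_zero (s := Ico _ N), add_zero]
    intro d hd
    rw [hg _ _ (by have := mem_Ico.mp hd; omega), zero_mul]

theorem qPoch_inv {q : ℂ} (h0 : q ≠ 0) (n : ℕ) :
    qPoch q⁻¹ q⁻¹ n = (-1) ^ n * q ^ (-tri n) * qPoch q q n := by
  induction n with
  | zero => simp [qPoch_zero, tri_zero]
  | succ n ih =>
    have h1 : -tri (n + 1) = -tri n + -((n + 1 : ℕ) : ℤ) := by rw [tri_succ]; push_cast; ring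
    rw [qPoch_succ, qPoch_succ, ih, h1, zpow_add₀ h0, zpow_neg q ((n + 1 : ℕ) : ℤ), zpow_natCast,
      ← pow_succ', ← pow_succ', inv_pow]
    have := pow_ne_zero (n + 1) h0
    field_simp
    ring

theorem gbin_inv {q : ℂ} (h0 : q ≠ 0) (hq : ∀ k : ℕ, q ^ (k + 1) ≠ 1) (a b : ℕ) :
    gbin q⁻¹ (a + b) a = q ^ (-((a : ℤ) * b)) * gbin q (a + b) a := by
  have hq' : ∀ k : ℕ, q⁻¹ ^ (k + 1) ≠ 1 := fun k h => hq k (by rwa [inv_pow, inv_eq_one] at h)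
  rw [gbin_eq_div hq', gbin_eq_div hq, qPoch_inv h0, qPoch_inv h0, qPoch_inv h0,
    show -tri (a + b) = -tri a + -tri b + -((a : ℤ) * b) by rw [tri_add]; ring,
    zpow_add₀ h0, zpow_add₀ h0]
  have h1 := zpow_ne_zero (-tri a) h0
  have h2 := zpow_ne_zero (-tri b) h0
  have h3 := qPoch_ne_zero hq a
  have h4 := qPoch_ne_zero hq b
  have h5 : ((-1 : ℂ)) ^ a ≠ 0 := pow_ne_zero _ (by norm_num)
  have h6 : ((-1 : ℂ)) ^ b ≠ 0 := pow_ne_zero _ (by norm_num)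
  rw [pow_add]
  field_simp

theorem inv_pow_mul_gbin_inv {q : ℂ} (h0 : q ≠ 0) (hq : ∀ k : ℕ, q ^ (k + 1) ≠ 1) (w d : ℕ) :
    q⁻¹ ^ (d ^ 2 + d) * gbin q⁻¹ w d = q ^ (-((d : ℤ) * w)) * gbin q w d * q⁻¹ ^ d := by
  rcases Nat.lt_or_ge w d with h | h
  · simp [gbin_eq_zero _ h]
  · obtain ⟨b, rfl⟩ := Nat.exists_eq_add_of_le h
    rw [gbin_inv h0 hq, ← zpow_natCast q⁻¹, ← zpow_natCast q⁻¹, inv_zpow', inv_zpow', ← mul_assoc,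
      ← zpow_add₀ h0, mul_right_comm, ← zpow_add₀ h0]
    congr 2
    push_cast
    ring

theorem inv_zpow_mul_gbin_inv {q : ℂ} (h0 : q ≠ 0) (hq : ∀ k : ℕ, q ^ (k + 1) ≠ 1) (w s : ℕ) :
    q⁻¹ ^ (-(s : ℤ) - (w : ℤ) * (s : ℤ)) * gbin q⁻¹ w s = q ^ (s ^ 2 + s) * gbin q w s := by
  rcases Nat.lt_or_ge w s with h | h
  · simp [gbin_eq_zero _ h]
  · obtain ⟨b, rfl⟩ := Nat.exists_eq_add_of_le h
    rw [gbin_inv h0 hq, ← zpow_natCast q, inv_zpow', ← mul_assoc, ← zpow_add₀ h0]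
    congr 2
    push_cast
    ring

/-- The left-hand side of the duality, for an arbitrary complex number in place of `ζ`. -/
def calF (m p N : ℕ) (q : ℂ) : ℂ :=
  ∑ f ∈ Finset.univ.filter
      (fun f : Fin (2 * m * p) → Fin N => ∀ i j, i ≤ j → f i ≤ f j),
    let n := extTup (2 * m * p) N f
    qPoch q q (n (2 * m * p)) * (-1 : ℂ) ^ (n (2 * m * p)) *
      q ^ (-(((n (2 * m * p) : ℤ) * ((n (2 * m * p) : ℤ) + 1)) / 2)) *
      (∏ i ∈ (Icc 1 (2 * m * p)).filter (fun i => ¬ m ∣ i),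
        ∏ j ∈ Icc (i + 1) (2 * m * p),
          q ^ (deltaLO m i j * (n i : ℤ) * (n j : ℤ))) *
      (∏ i ∈ Icc 1 (2 * p - 1),
        (-1 : ℂ) ^ (n (m * i)) *
          q ^ (((n (m * i) : ℤ) * ((n (m * i) : ℤ) + 1)) / 2)) *
      (∏ i ∈ Icc 1 (2 * m * p - 1),
        q ^ (betLO m i * (n i : ℤ)) * gbin q (n (i + 1)) (n i))

/-- The right-hand side of the duality, for an arbitrary complex number in place of `ζ`. -/
def calU (m p N : ℕ) (q : ℂ) : ℂ :=
  ∑ a ∈ Finset.univ.filter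
      (fun a : Fin m → Fin N => ∀ i j, i ≤ j → a i ≤ a j),
    ∑ b ∈ Finset.univ.filter
        (fun b : Fin p → Fin N =>
          (∀ i j, i ≤ j → b i ≤ b j) ∧ extTup p N b p = extTup m N a m),
      (let na := extTup m N a
      let sb := extTup p N b
      (qPoch q⁻¹ q⁻¹ (na m)) ^ 2 * (-1 : ℂ) ^ (na m) *
        q⁻¹ ^ (-(((na m : ℤ) * ((na m : ℤ) + 1)) / 2)) *
        (∏ i ∈ Icc 1 (m - 1),
          q⁻¹ ^ ((na i) ^ 2 + na i) * gbin q⁻¹ (na (i + 1)) (na i)) *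
        (∏ j ∈ Icc 1 (p - 1),
          q⁻¹ ^ (-(sb j : ℤ) - (sb (j + 1) : ℤ) * (sb j : ℤ)) *
            gbin q⁻¹ (sb (j + 1)) (sb j)))

theorem calF_eq_sum {q : ℂ} (h0 : q ≠ 0) (hq : ∀ k : ℕ, q ^ (k + 1) ≠ 1) {m p : ℕ} (hm : 0 < m)
    (hp : 0 < p) (N : ℕ) :
    calF m p N q = ∑ n ∈ range N, qPoch q q n * (-1) ^ n * q ^ (-tri n) *
      (qPoch q q n * vSum q p n * chainSum q (fun _ => q⁻¹) (m - 1) n) := by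
  have hmp : 0 < m * p := Nat.mul_pos hm hp
  obtain ⟨P, hP⟩ : ∃ P, 2 * m * p = P + 1 := ⟨2 * m * p - 1, by rw [mul_assoc]; omega⟩
  have hG : calF m p N q = sumOver N (down (2 * m * p))
      (fun x : ℕ → ℕ => qPoch q q (x (2 * m * p)) * (-1) ^ (x (2 * m * p)) *
        q ^ (-tri (x (2 * m * p))) * towerWt q m p (fun _ => q⁻¹) x) fun _ => 0 := by
    rw [← sum_extTup, calF, Finset.sum_filter_of_ne]
    · refine Finset.sum_congr rfl fun f _ => ?_
      rw [← prod_eq_towerWt h0 hm hp (x := extTup (2 * m * p) N f) (by simp [extTup])]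
      simp only [sgnTri, tri]
      ring
    · intro f _ hf
      exact monotone_of_extTup f (extTup_le_of_prod_ne_zero (right_ne_zero_of_mul hf))
  rw [hG, hP, down, sumOver]
  refine Finset.sum_congr rfl fun n hn => ?_
  set x : ℕ → ℕ := Function.update (fun _ => 0) (P + 1) n with hx
  have hxP : x (2 * m * p) = n := by rw [hP, hx, Function.update_self]
  have hx0 : x 0 = 0 := by rw [hx, Function.update_of_ne (by omega)]
  have hperm : (blocks m p).Perm (0 :: down P) := by
    rw [List.perm_ext_iff_of_nodup (nodup_blocks hm p)
      (List.nodup_cons.mpr ⟨by rw [mem_down]; omega, nodup_down P⟩)]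
    intro i
    rw [mem_blocks hm, List.mem_cons, mem_down]
    omega
  have hT := sum_towerWt h0 hq hm p (y := fun _ => q⁻¹) (fun _ => inv_ne_zero h0)
    (x := x) (by rw [hxP]; exact mem_range.mp hn)
  rw [hxP, sumOver_perm hperm (nodup_blocks hm p), sumOver,
    Finset.sum_eq_single 0, Function.update_eq_self_iff.mpr hx0.symm] at hT
  · rw [← hT, ← sumOver_mul_left]
    refine sumOver_congr fun z hz _ => ?_
    rw [hz (P + 1) (by rw [mem_down]; omega), ← hP, hxP]
  · intro c _ hc
    have hzero : sumOver N (down P) (towerWt q m p fun _ => q⁻¹) (Function.update x 0 c)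
        = sumOver N (down P) (fun z => 0 * towerWt q m p (fun _ => q⁻¹) z)
          (Function.update x 0 c) := by
      refine sumOver_congr fun z hz _ => ?_
      have : z 0 = c := by rw [hz 0 (by rw [mem_down]; omega), Function.update_self]
      rw [towerWt, if_neg (by omega)]
      ring
    rw [hzero, sumOver_mul_left, zero_mul]
  · intro h
    exact absurd (mem_range.mpr (by have := mem_range.mp hn; omega)) h

theorem calU_eq_sum {q : ℂ} (h0 : q ≠ 0) (hq : ∀ k : ℕ, q ^ (k + 1) ≠ 1) {m p : ℕ} (hm : 0 < m)
    (hp : 0 < p) (N : ℕ) :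
    calU m p N q = ∑ n ∈ range N, qPoch q q n * (-1) ^ n * q ^ (-tri n) *
      (qPoch q q n * vSum q p n * chainSum q (fun _ => q⁻¹) (m - 1) n) := by
  set A : (ℕ → ℕ) → ℂ := fun z => ∏ i ∈ Icc 1 (m - 1),
    q ^ (-((z i : ℤ) * z (i + 1))) * gbin q (z (i + 1)) (z i) * q⁻¹ ^ z i with hA
  set B : (ℕ → ℕ) → ℂ := fun z => ∏ i ∈ Icc 1 (p - 1),
    q ^ (z i ^ 2 + z i) * gbin q (z (i + 1)) (z i) with hB
  set C : ℕ → ℂ := fun n => qPoch q q n ^ 2 * (-1) ^ n * q ^ (-tri n) with hC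
  have hpref : ∀ n : ℕ, qPoch q⁻¹ q⁻¹ n ^ 2 * (-1 : ℂ) ^ n *
      q⁻¹ ^ (-(((n : ℤ) * ((n : ℤ) + 1)) / 2)) = C n := by
    intro n
    have h1 : ((-1 : ℂ) ^ n) ^ 2 = 1 := by rw [← pow_mul, mul_comm, pow_mul]; norm_num
    have h2 := zpow_ne_zero (tri n) h0
    rw [hC, qPoch_inv h0]
    simp only
    rw [inv_zpow', neg_neg, ← tri, zpow_neg, mul_pow, mul_pow, h1]
    field_simp
  have hU : calU m p N q = sumOver N (down m) (fun z =>
      sumOver N (down p) (fun w => if w p = z m then C (z m) * A z * B w else 0) fun _ => 0)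
      fun _ => 0 := by
    rw [← sum_extTup, calU, Finset.sum_filter_of_ne]
    · refine Finset.sum_congr rfl fun a _ => ?_
      rw [← sum_extTup, Finset.sum_filter]
      refine Finset.sum_congr rfl fun b _ => ?_
      simp only [hpref, inv_pow_mul_gbin_inv h0 hq, inv_zpow_mul_gbin_inv h0 hq]
      by_cases h : extTup p N b p = extTup m N a m
      · rw [if_pos h]
        by_cases h' : ∀ i j, i ≤ j → b i ≤ b j
        · rw [if_pos ⟨h', h⟩]
        · rw [if_neg (fun hh => h' hh.1)]
          by_contra hne
          exact h' (monotone_of_extTup b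
            (extTup_le_of_prod_ne_zero (right_ne_zero_of_mul (Ne.symm hne))))
      · rw [if_neg h, if_neg (fun hh => h hh.2)]
    · intro a _ hne
      obtain ⟨b, _, hb⟩ := Finset.exists_ne_zero_of_sum_ne_zero hne
      exact monotone_of_extTup a (extTup_le_of_prod_ne_zero
        (right_ne_zero_of_mul (left_ne_zero_of_mul hb)))
  obtain ⟨m, rfl⟩ : ∃ k, m = k + 1 := ⟨m - 1, by omega⟩
  obtain ⟨p, rfl⟩ : ∃ k, p = k + 1 := ⟨p - 1, by omega⟩
  simp only [Nat.add_sub_cancel] at hA hB ⊢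
  have hAsum : ∀ n ∈ range N, sumOver N (down m) A (Function.update (fun _ => 0) (m + 1) n)
      = chainSum q (fun _ => q⁻¹) m n := by
    intro n hn
    have := sumOver_chain (N := N)
      (g := fun w d => q ^ (-((d : ℤ) * w)) * gbin q w d * q⁻¹ ^ d)
      (K := fun k w => chainSum q (fun _ => q⁻¹) k w)
      (fun w d h => by simp [gbin_eq_zero q h]) (fun w => rfl)
      (fun k w => by simp only [chainSum, mul_assoc]) m
      (x := Function.update (fun _ => 0) (m + 1) n)
      (by rw [Function.update_self]; exact mem_range.mp hn)
    rwa [Function.update_self] at this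
  have hBsum : ∀ n ∈ range N, sumOver N (down p) B (Function.update (fun _ => 0) (p + 1) n)
      = vSum q (p + 1) n := by
    intro n hn
    have := sumOver_chain (N := N) (g := fun w d => q ^ (d ^ 2 + d) * gbin q w d)
      (K := fun k w => vSum q (k + 1) w)
      (fun w d h => by simp [gbin_eq_zero q h])
      (fun w => by simp [vSum, Finset.sum_ite_eq', gbin_zero_right]) (fun k w => rfl) p
      (x := Function.update (fun _ => 0) (p + 1) n)
      (by rw [Function.update_self]; exact mem_range.mp hn)
    rwa [Function.update_self] at this
  rw [hU, down, sumOver]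
  refine Finset.sum_congr rfl fun n hn => ?_
  have hinner : ∀ z : ℕ → ℕ, z (m + 1) = n → sumOver N (down (p + 1))
      (fun w => if w (p + 1) = z (m + 1) then C (z (m + 1)) * A z * B w else 0) (fun _ => 0)
      = C n * vSum q (p + 1) n * A z := by
    intro z hz
    rw [down, sumOver, hz, Finset.sum_eq_single n]
    · rw [← hBsum n hn, mul_right_comm (C n), ← sumOver_mul_left]
      refine sumOver_congr fun w hw _ => ?_
      rw [if_pos (by rw [hw _ (by rw [mem_down]; omega), Function.update_self])]
    · intro c _ hc
      have : sumOver N (down p) (fun w => if w (p + 1) = n then C n * A z * B w else 0)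
          (Function.update (fun _ => 0) (p + 1) c)
          = sumOver N (down p) (fun w => 0 * B w) (Function.update (fun _ => 0) (p + 1) c) := by
        refine sumOver_congr fun w hw _ => ?_
        rw [if_neg (by rw [hw _ (by rw [mem_down]; omega), Function.update_self]; exact hc),
          zero_mul]
      rw [this, sumOver_mul_left, zero_mul]
    · exact fun h => absurd hn h
  have houter : sumOver N (down m) (fun z => sumOver N (down (p + 1))
      (fun w => if w (p + 1) = z (m + 1) then C (z (m + 1)) * A z * B w else 0) (fun _ => 0))
      (Function.update (fun _ => 0) (m + 1) n)
      = sumOver N (down m) (fun z => C n * vSum q (p + 1) n * A z)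
      (Function.update (fun _ => 0) (m + 1) n) :=
    sumOver_congr fun z hz _ => hinner z
      (by rw [hz _ (by rw [mem_down]; omega), Function.update_self])
  rw [houter, sumOver_mul_left, hAsum n hn, hC]
  ring

theorem continuous_gbin (n k : ℕ) : Continuous fun q : ℂ => gbin q n k :=
  Polynomial.continuous_aeval _

theorem continuous_qPoch (n : ℕ) : Continuous fun q : ℂ => qPoch q q n := by
  unfold qPoch
  fun_prop

theorem continuousAt_calF (m p N : ℕ) {ζ : ℂ} (h : ζ ≠ 0) : ContinuousAt (calF m p N) ζ := by
  have hz : ∀ k : ℤ, ContinuousAt (fun q : ℂ => q ^ k) ζ := fun k =>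
    continuousAt_zpow₀ ζ k (Or.inl h)
  have hg : ∀ n k, ContinuousAt (fun q : ℂ => gbin q n k) ζ := fun n k =>
    (continuous_gbin n k).continuousAt
  have hP : ∀ n, ContinuousAt (fun q : ℂ => qPoch q q n) ζ := fun n =>
    (continuous_qPoch n).continuousAt
  unfold calF
  refine tendsto_finsetSum _ fun f _ => ?_
  refine ContinuousAt.mul (ContinuousAt.mul (ContinuousAt.mul
    (ContinuousAt.mul ((hP _).mul continuousAt_const) (hz _)) ?_) ?_) ?_
  · exact tendsto_finsetProd _ fun i _ => tendsto_finsetProd _ fun j _ => hz _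
  · exact tendsto_finsetProd _ fun i _ => continuousAt_const.mul (hz _)
  · exact tendsto_finsetProd _ fun i _ => (hz _).mul (hg _ _)

theorem continuousAt_calU (m p N : ℕ) {ζ : ℂ} (h : ζ ≠ 0) : ContinuousAt (calU m p N) ζ := by
  have hi : ContinuousAt (fun q : ℂ => q⁻¹) ζ := continuousAt_inv₀ h
  have hz : ∀ k : ℤ, ContinuousAt (fun q : ℂ => q⁻¹ ^ k) ζ := fun k =>
    hi.zpow₀ k (Or.inl (inv_ne_zero h))
  have hg : ∀ n k, ContinuousAt (fun q : ℂ => gbin q⁻¹ n k) ζ := fun n k =>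
    (continuous_gbin n k).continuousAt.comp hi
  have hP : ∀ n, ContinuousAt (fun q : ℂ => qPoch q⁻¹ q⁻¹ n) ζ := fun n =>
    (continuous_qPoch n).continuousAt.comp hi
  unfold calU
  refine tendsto_finsetSum _ fun a _ => tendsto_finsetSum _ fun b _ => ?_
  refine ContinuousAt.mul (ContinuousAt.mul
    (ContinuousAt.mul (((hP _).pow 2).mul continuousAt_const) (hz _)) ?_) ?_
  · exact tendsto_finsetProd _ fun i _ => (hi.pow _).mul (hg _ _)
  · exact tendsto_finsetProd _ fun i _ => (hz _).mul (hg _ _)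

theorem calF_eq_calU_of_norm_eq_one {m p : ℕ} (hm : 0 < m) (hp : 0 < p) (N : ℕ) {ζ : ℂ}
    (hζ : ‖ζ‖ = 1) : calF m p N ζ = calU m p N ζ := by
  have h0 : ζ ≠ 0 := norm_ne_zero_iff.mp (by rw [hζ]; exact one_ne_zero)
  have hlim : Filter.Tendsto (fun s : ℕ => ζ * (1 + 1 / ((s : ℂ) + 1))) Filter.atTop (nhds ζ) := by
    have := (tendsto_one_div_add_atTop_nhds_zero_nat (𝕜 := ℂ)).const_add 1 |>.const_mul ζ
    simpa using this
  have heq : ∀ s : ℕ, calF m p N (ζ * (1 + 1 / ((s : ℂ) + 1)))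
      = calU m p N (ζ * (1 + 1 / ((s : ℂ) + 1))) := by
    intro s
    have hnorm : 1 < ‖ζ * (1 + 1 / ((s : ℂ) + 1))‖ := by
      rw [norm_mul, hζ, one_mul,
        show (1 + 1 / ((s : ℂ) + 1)) = ((1 + 1 / ((s : ℝ) + 1) : ℝ) : ℂ) by push_cast; rfl,
        Complex.norm_of_nonneg (by positivity)]
      have : 0 < 1 / ((s : ℝ) + 1) := by positivity
      linarith
    have hne : ζ * (1 + 1 / ((s : ℂ) + 1)) ≠ 0 := norm_pos_iff.mp (by linarith)
    have hq : ∀ k : ℕ, (ζ * (1 + 1 / ((s : ℂ) + 1))) ^ (k + 1) ≠ 1 := by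
      intro k h
      have h1 := one_lt_pow₀ hnorm (Nat.succ_ne_zero k)
      rw [← norm_pow, h, norm_one] at h1
      exact lt_irrefl _ h1
    rw [calF_eq_sum hne hq hm hp, calU_eq_sum hne hq hm hp]
  have hF := (continuousAt_calF m p N h0).tendsto.comp hlim
  have hU := (continuousAt_calU m p N h0).tendsto.comp hlim
  exact tendsto_nhds_unique hF (hU.congr fun s => (heq s).symm)

/-- Corollary 1.4 (Lovejoy–Osburn): duality at roots of unity,
`𝓕_(m,p)(ζ) = 𝓤_(m,p)(-1; ζ⁻¹)`. -/
theorem calF_calU_duality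
    (m p N : ℕ) (hm : 0 < m) (hp : 0 < p) (hN : 0 < N)
    (ζ : ℂ) (hζ : ζ ^ N = 1) :
    (∑ f ∈ Finset.univ.filter
        (fun f : Fin (2 * m * p) → Fin N => ∀ i j, i ≤ j → f i ≤ f j),
      let n := extTup (2 * m * p) N f
      qPoch ζ ζ (n (2 * m * p)) * (-1 : ℂ) ^ (n (2 * m * p)) *
        ζ ^ (-(((n (2 * m * p) : ℤ) * ((n (2 * m * p) : ℤ) + 1)) / 2)) *
        (∏ i ∈ (Icc 1 (2 * m * p)).filter (fun i => ¬ m ∣ i),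
          ∏ j ∈ Icc (i + 1) (2 * m * p),
            ζ ^ (deltaLO m i j * (n i : ℤ) * (n j : ℤ))) *
        (∏ i ∈ Icc 1 (2 * p - 1),
          (-1 : ℂ) ^ (n (m * i)) *
            ζ ^ (((n (m * i) : ℤ) * ((n (m * i) : ℤ) + 1)) / 2)) *
        (∏ i ∈ Icc 1 (2 * m * p - 1),
          ζ ^ (betLO m i * (n i : ℤ)) * gbin ζ (n (i + 1)) (n i)))
    = ∑ a ∈ Finset.univ.filter
          (fun a : Fin m → Fin N => ∀ i j, i ≤ j → a i ≤ a j),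
        ∑ b ∈ Finset.univ.filter
            (fun b : Fin p → Fin N =>
              (∀ i j, i ≤ j → b i ≤ b j) ∧ extTup p N b p = extTup m N a m),
          (let na := extTup m N a
          let sb := extTup p N b
          (qPoch ζ⁻¹ ζ⁻¹ (na m)) ^ 2 * (-1 : ℂ) ^ (na m) *
            ζ⁻¹ ^ (-(((na m : ℤ) * ((na m : ℤ) + 1)) / 2)) *
            (∏ i ∈ Icc 1 (m - 1),
              ζ⁻¹ ^ ((na i) ^ 2 + na i) * gbin ζ⁻¹ (na (i + 1)) (na i)) *
            (∏ j ∈ Icc 1 (p - 1),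
              ζ⁻¹ ^ (-(sb j : ℤ) - (sb (j + 1) : ℤ) * (sb j : ℤ)) *
                gbin ζ⁻¹ (sb (j + 1)) (sb j))) := by
  have hnorm : ‖ζ‖ = 1 := Complex.norm_eq_one_of_pow_eq_one hζ hN.ne'
  exact calF_eq_calU_of_norm_eq_one hm hp N hnorm

end
end

section
/- Let m and p be positive integers and set l = 4mp−1 and t = 4mp−2p−1. Then for every integer j with 1 ≤ j ≤ 2mp−1, the sign σ_j = (−1)^{⌊(2j−1)t/l⌋} equals 1 if j mod 2m lies in {1, 2, …, m}, and equals −1 if j mod 2m lies in {0, m+1, m+2, …, 2m−1}. -/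
open Finset

noncomputable section

/-- If `s = l - t` and `c = ⌈(2j-1)s/l⌉`, then `⌊(2j-1)t/l⌋ = 2j-1-c`. -/
theorem sigmaT_eq_neg_one_pow {l t s j c d : ℕ} (hl : l = t + s) (hcd : 2 * j - 1 = c + d)
    (hle : s * (2 * j - 1) ≤ c * l) (hlt : c * l < s * (2 * j - 1) + l) :
    sigmaT l t j = (-1) ^ d := by
  unfold sigmaT
  rw [hcd] at *
  congr 1
  subst hl
  exact Nat.div_eq_of_lt_le (by nlinarith) (by nlinarith)

/-- Lemma 2.2(i): for `l = 4mp-1`, `t = 4mp-2p-1`, the sign `σ_j` is `1` if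
`j ≡ 1, …, m (mod 2m)` and `-1` if `j ≡ 0, m+1, …, 2m-1 (mod 2m)`. -/
theorem sigma_formula_neg_neg
    (m p : ℕ) (hm : 0 < m) (hp : 0 < p)
    (j : ℕ) (hj1 : 1 ≤ j) (hj2 : j ≤ 2 * m * p - 1) :
    (1 ≤ j % (2 * m) ∧ j % (2 * m) ≤ m →
      sigmaT (4 * m * p - 1) (4 * m * p - 2 * p - 1) j = 1) ∧
    (j % (2 * m) = 0 ∨ m + 1 ≤ j % (2 * m) →
      sigmaT (4 * m * p - 1) (4 * m * p - 2 * p - 1) j = -1) := by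
  obtain ⟨l, hl⟩ : ∃ l, 4 * m * p = l + 1 :=
    ⟨4 * m * p - 1, (Nat.sub_add_cancel (by nlinarith [Nat.mul_pos hm hp])).symm⟩
  have hpm : p ≤ m * p := Nat.le_mul_of_pos_left p hm
  have hj3 : j < 2 * m * p := by
    have : 0 < 2 * m * p := by positivity
    omega
  have hdiv := Nat.div_add_mod j (2 * m)
  have hkp : j / (2 * m) < p := Nat.div_lt_of_lt_mul hj3
  have hr : j % (2 * m) < 2 * m := Nat.mod_lt _ (by positivity)
  generalize j / (2 * m) = k at *
  generalize j % (2 * m) = r at *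
  have hlt : 4 * m * p - 1 = 4 * m * p - 2 * p - 1 + 2 * p := by
    have : 4 * m * p = 4 * (m * p) := by ring
    omega
  have hmk : 2 * m * k = 2 * (m * k) := by ring
  have hkm : k ≤ m * k := Nat.le_mul_of_pos_left k hm
  have hl1 : 4 * m * p - 1 = l := by omega
  have hu : (2 * j - 1) + 1 = 2 * (2 * m * k + r) := by omega
  have key : 2 * p * (2 * j - 1) + 2 * p = 2 * k * l + 2 * k + 4 * (p * r) := by
    linear_combination 2 * p * hu + 2 * k * hl
  constructor
  · rintro ⟨h1, h2⟩
    rw [sigmaT_eq_neg_one_pow (c := 2 * k + 1) (d := 2 * (2 * (m * k) + r - 1 - k)) hlt (by omega)]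
    · simp [pow_mul]
    · rw [hl1]
      linarith [Nat.mul_le_mul_left p h2]
    · rw [hl1]
      linarith [Nat.mul_le_mul_left p h1]
  · rintro (rfl | h)
    · have hk : 0 < k := by
        rcases Nat.eq_zero_or_pos k with rfl | hk
        · omega
        · exact hk
      rw [sigmaT_eq_neg_one_pow (c := 2 * k) (d := 2 * (2 * (m * k) - 1 - k) + 1) hlt (by omega)]
      · simp [pow_succ, pow_mul]
      · rw [hl1]
        linarith
      · rw [hl1]
        linarith
    · rw [sigmaT_eq_neg_one_pow (c := 2 * k + 2) (d := 2 * (2 * (m * k) + r - 2 - k) + 1) hlt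
        (by omega)]
      · simp [pow_succ, pow_mul]
      · rw [hl1]
        linarith [Nat.mul_le_mul_left p hr.le]
      · rw [hl1]
        linarith [Nat.mul_le_mul_left p h]

end
end

section
/- Let m and p be positive integers and set l = 4mp−1, t = 4mp−2p−1, p' = 2mp−1. Let s and k be integers with 0 ≤ s ≤ 2m−1 and sp+1 ≤ k ≤ min((s+1)p, 2mp−1). Then i_k = 2m(p−k) + m + (s/2)(4mp−1) if s is even, and i_k = 2m(k−p) − m + 1 − ((s−1)/2)(4mp−1) if s is odd. -/
open Finset

noncomputable section

/-- `r(j)` is congruent to `(2j-1)t` modulo `2l`. -/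
lemma two_mul_dvd_sub_rT (l t j : ℕ) (hj : 1 ≤ j) :
    (2 * (l : ℤ)) ∣ (2 * (j : ℤ) - 1) * t - rT l t j := by
  have h := Nat.div_add_mod ((2 * j - 1) * t) (2 * l)
  zify [show 1 ≤ 2 * j by omega] at h
  unfold rT
  push_cast [show 1 ≤ 2 * j by omega]
  split_ifs
  · exact ⟨(2 * (j : ℤ) - 1) * t / (2 * l), by linarith⟩
  · exact ⟨(2 * (j : ℤ) - 1) * t / (2 * l) + 1, by linarith⟩

lemma rT_bounds (l t j : ℕ) (hl : 0 < l) : -(l : ℤ) ≤ rT l t j ∧ rT l t j < l := by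
  have h : (2 * j - 1) * t % (2 * l) < 2 * l := Nat.mod_lt _ (by omega)
  unfold rT
  generalize (2 * j - 1) * t % (2 * l) = x at h
  split_ifs <;> omega

/-- `r'(j) = k` as soon as `(2j-1)t ≡ ±(2k-1) (mod 2l)` and `2k-1 < l`. -/
lemma rpT_eq_of_dvd {l t j k : ℕ} (hj : 1 ≤ j) (hk : 1 ≤ k) (hkl : 2 * k ≤ l)
    (h : (2 * (l : ℤ)) ∣ (2 * (j : ℤ) - 1) * t - (2 * k - 1) ∨
      (2 * (l : ℤ)) ∣ (2 * (j : ℤ) - 1) * t + (2 * k - 1)) : rpT l t j = k := by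
  have hr := two_mul_dvd_sub_rT l t j hj
  obtain ⟨h1, h2⟩ := rT_bounds l t j (by omega)
  have habs : rT l t j = 2 * k - 1 ∨ rT l t j = -(2 * k - 1) := by
    refine h.imp (fun h => ?_) (fun h => ?_)
    · have hd := dvd_sub hr h
      have := Int.eq_zero_of_abs_lt_dvd hd (by rw [abs_lt]; constructor <;> linarith)
      linarith
    · have hd := dvd_sub hr h
      have := Int.eq_zero_of_abs_lt_dvd hd (by rw [abs_lt]; constructor <;> linarith)
      linarith
  unfold rpT
  omega

/-- For `t` odd, `r(j)` is odd, so `r'(j) = k` forces `(2j-1)t ≡ ±(2k-1) (mod 2l)`. -/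
lemma dvd_of_rpT_eq {l t j k : ℕ} (ht : Odd t) (hj : 1 ≤ j) (h : rpT l t j = k) :
    (2 * (l : ℤ)) ∣ (2 * (j : ℤ) - 1) * t - (2 * k - 1) ∨
      (2 * (l : ℤ)) ∣ (2 * (j : ℤ) - 1) * t + (2 * k - 1) := by
  have hr := two_mul_dvd_sub_rT l t j hj
  have hodd : Odd (rT l t j) := by
    obtain ⟨c, hc⟩ := hr
    obtain ⟨d, rfl⟩ := ht
    push_cast at hc
    exact ⟨2 * j * d + j - d - 1 - l * c, by linarith⟩
  obtain ⟨d, hd⟩ := hodd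
  have habs : rT l t j = 2 * k - 1 ∨ rT l t j = -(2 * k - 1) := by
    unfold rpT at h
    omega
  rcases habs with habs | habs <;> rw [habs] at hr
  · exact Or.inl hr
  · exact Or.inr (by rwa [sub_neg_eq_add] at hr)

/-- The map `r'` is injective on `{1, …, (l-1)/2}` for `l`, `t` odd and coprime. -/
lemma rpT_injOn {l t : ℕ} (hl : Odd l) (ht : Odd t) (hlt : IsCoprime (l : ℤ) t) :
    Set.InjOn (rpT l t) (Finset.Icc 1 ((l - 1) / 2)) := by
  intro i hi j hj hij
  simp only [Finset.coe_Icc, Set.mem_Icc] at hi hj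
  have h2 : IsCoprime (l : ℤ) 2 := by
    obtain ⟨d, rfl⟩ := hl
    exact ⟨1, -d, by push_cast; ring⟩
  have hcop : IsCoprime (l : ℤ) (2 * t) := h2.mul_right hlt
  have key : (l : ℤ) ∣ (i - j : ℤ) ∨ (l : ℤ) ∣ (i + j - 1 : ℤ) := by
    have hl2 : (l : ℤ) ∣ 2 * l := ⟨2, by ring⟩
    rcases dvd_of_rpT_eq ht hi.1 rfl with h1 | h1 <;>
      rcases dvd_of_rpT_eq ht hj.1 hij.symm with h3 | h3
    · refine Or.inl (hcop.dvd_of_dvd_mul_left ?_)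
      convert hl2.trans (dvd_sub h1 h3) using 1; ring
    · refine Or.inr (hcop.dvd_of_dvd_mul_left ?_)
      convert hl2.trans (dvd_add h1 h3) using 1; ring
    · refine Or.inr (hcop.dvd_of_dvd_mul_left ?_)
      convert hl2.trans (dvd_add h1 h3) using 1; ring
    · refine Or.inl (hcop.dvd_of_dvd_mul_left ?_)
      convert hl2.trans (dvd_sub h1 h3) using 1; ring
  rcases key with h | h
  · have := Int.eq_zero_of_abs_lt_dvd h (by rw [abs_lt]; constructor <;> omega)
    omega
  · have := Int.eq_zero_of_abs_lt_dvd h (by rw [abs_lt]; constructor <;> omega)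
    omega

/-- Characterization of `i_k` by the congruence `(2j-1)t ≡ ±(2k-1) (mod 2l)`, with `j` an
integer in `[1, (l-1)/2]`. -/
lemma iT_eq_of_dvd {l t k : ℕ} {j : ℤ} (hl : Odd l) (ht : Odd t) (hlt : IsCoprime (l : ℤ) t)
    (hk : 1 ≤ k) (hkl : 2 * k ≤ l) (hj : 1 ≤ j) (hjl : 2 * j + 1 ≤ l)
    (h : (2 * (l : ℤ)) ∣ (2 * j - 1) * t - (2 * k - 1) ∨
      (2 * (l : ℤ)) ∣ (2 * j - 1) * t + (2 * k - 1)) : (iT l t k : ℤ) = j := by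
  lift j to ℕ using by omega
  have hmem : j ∈ Finset.Icc 1 ((l - 1) / 2) := Finset.mem_Icc.2 (by omega)
  have hr : rpT l t j = k := rpT_eq_of_dvd (by omega) hk hkl h
  have hex : ∃ j, j ∈ Finset.Icc 1 ((l - 1) / 2) ∧ rpT l t j = k := ⟨j, hmem, hr⟩
  rw [iT, dif_pos hex]
  exact_mod_cast rpT_injOn hl ht hlt hex.choose_spec.1 hmem (hex.choose_spec.2.trans hr.symm)

/-- Lemma 2.2(ii): for `l = 4mp-1`, `t = 4mp-2p-1`, the explicit value of `i_k`
on the interval `sp+1 ≤ k ≤ min((s+1)p, 2mp-1)`. -/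
theorem iT_formula_neg_neg
    (m p s k : ℕ) (hm : 0 < m) (hp : 0 < p)
    (hs : s ≤ 2 * m - 1) (hk1 : s * p + 1 ≤ k)
    (hk2 : k ≤ min ((s + 1) * p) (2 * m * p - 1)) :
    (iT (4 * m * p - 1) (4 * m * p - 2 * p - 1) k : ℤ)
      = if s % 2 = 0 then
          2 * (m : ℤ) * ((p : ℤ) - (k : ℤ)) + (m : ℤ)
            + ((s / 2 : ℕ) : ℤ) * (4 * (m : ℤ) * (p : ℤ) - 1)
        else
          2 * (m : ℤ) * ((k : ℤ) - (p : ℤ)) - (m : ℤ) + 1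
            - (((s - 1) / 2 : ℕ) : ℤ) * (4 * (m : ℤ) * (p : ℤ) - 1) := by
  have hmp : p ≤ m * p := Nat.le_mul_of_pos_left p hm
  have hl1 : 1 ≤ 4 * m * p := by nlinarith
  have ht1 : 2 * p + 1 ≤ 4 * m * p := by nlinarith
  obtain ⟨hks, hkp⟩ := le_min_iff.1 hk2
  have hkp' : k + 1 ≤ 2 * m * p := by
    have : 1 ≤ 2 * m * p := by nlinarith
    omega
  have hl : ((4 * m * p - 1 : ℕ) : ℤ) = 4 * m * p - 1 := by push_cast [hl1]; ring
  have ht : ((4 * m * p - 2 * p - 1 : ℕ) : ℤ) = 4 * m * p - 2 * p - 1 := by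
    rw [Nat.sub_sub]; push_cast [ht1]; ring
  have hlodd : Odd (4 * m * p - 1) := by
    rw [← Int.odd_coe_nat, hl]; exact ⟨2 * m * p - 1, by ring⟩
  have htodd : Odd (4 * m * p - 2 * p - 1) := by
    rw [← Int.odd_coe_nat, ht]; exact ⟨2 * m * p - p - 1, by ring⟩
  have hcop : IsCoprime ((4 * m * p - 1 : ℕ) : ℤ) ((4 * m * p - 2 * p - 1 : ℕ) : ℤ) := by
    rw [hl, ht]; exact ⟨2 * m - 1, -(2 * m), by ring⟩
  have hkl : 2 * k ≤ 4 * m * p - 1 := by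
    have : 4 * m * p = 2 * (2 * m * p) := by ring
    omega
  obtain ⟨e, rfl⟩ : ∃ e, k = s * p + e := ⟨k - s * p, by omega⟩
  have he1 : 1 ≤ e := by omega
  have hep : e ≤ p := by linarith
  have hlow : m * 1 ≤ m * e := Nat.mul_le_mul_left m he1
  have hhigh : m * e ≤ m * p := Nat.mul_le_mul_left m hep
  zify at hkp' hlow hhigh hm
  rcases Nat.even_or_odd' s with ⟨a, rfl | rfl⟩
  · rw [if_pos (by omega), Nat.mul_div_cancel_left a two_pos]
    have ha : (a : ℤ) + 1 ≤ m := by omega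
    refine iT_eq_of_dvd hlodd htodd hcop (by omega) hkl ?_ ?_ (Or.inl ?_)
    · push_cast; linarith
    · rw [hl]; push_cast; linarith
    · rw [hl, ht]; push_cast
      exact ⟨m - 1 + 2 * m * (p - (2 * a * p + e)) + a * (4 * m * p - 1)
        - (p - (2 * a * p + e)) - 2 * a * p, by ring⟩
  · rw [if_neg (by omega), Nat.add_sub_cancel, Nat.mul_div_cancel_left a two_pos]
    have ha : (a : ℤ) + 1 ≤ m := by omega
    refine iT_eq_of_dvd hlodd htodd hcop (by omega) hkl ?_ ?_ (Or.inr ?_)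
    · push_cast; linarith
    · rw [hl]; push_cast at hkp' ⊢
      rcases ha.lt_or_eq with ha | ha
      · linarith
      · have hlt : (e : ℤ) + 1 ≤ p := by
          rw [← ha] at hkp'
          linarith
        have := mul_le_mul_of_nonneg_left hlt hm.le
        linarith
    · rw [hl, ht]; push_cast
      exact ⟨-(m - 1 + 2 * m * (p - ((2 * a + 1) * p + e)) + a * (4 * m * p - 1)
        - (p - ((2 * a + 1) * p + e)) - 2 * a * p), by ring⟩

end
end

section
/- Let m and p be positive integers and set l = 4mp−1, t = 4mp−2p−1, p' = 2mp−1. Let s and k be integers with 0 ≤ s ≤ 2m−1 and sp+1 ≤ k ≤ min((s+1)p, 2mp−1). Then σ_{i_k} = (−1)^s. -/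
open Finset

noncomputable section

theorem rpT_and_sigmaT_of_eq_add {l t j k : ℕ} {q : ℤ} (hk : 1 ≤ k) (hkl : 2 * k ≤ l)
    (h : (((2 * j - 1) * t : ℕ) : ℤ) = 2 * l * q + (2 * k - 1)) :
    rpT l t j = k ∧ sigmaT l t j = 1 := by
  unfold rpT rT sigmaT
  generalize (2 * j - 1) * t = x at *
  have hq : 0 ≤ q := by
    by_contra hq
    have : (l : ℤ) * q ≤ l * (-1) := by gcongr; omega
    nlinarith
  lift q to ℕ using hq
  obtain rfl : x = 2 * l * q + (2 * k - 1) := by zify [show 1 ≤ 2 * k by omega]; linarith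
  have hmod : (2 * l * q + (2 * k - 1)) % (2 * l) = 2 * k - 1 := by
    rw [Nat.mul_add_mod, Nat.mod_eq_of_lt (by omega)]
  have hdiv : (2 * l * q + (2 * k - 1)) / l = 2 * q := by
    rw [show 2 * l * q = l * (2 * q) by ring, Nat.mul_add_div (by omega),
      Nat.div_eq_of_lt (by omega), add_zero]
  rw [hmod, hdiv, if_pos (by omega)]
  exact ⟨by omega, by simp⟩

theorem rpT_and_sigmaT_of_eq_sub {l t j k : ℕ} {q : ℤ} (hk : 1 ≤ k) (hkl : 2 * k ≤ l)
    (h : (((2 * j - 1) * t : ℕ) : ℤ) = 2 * l * q - (2 * k - 1)) :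
    rpT l t j = k ∧ sigmaT l t j = -1 := by
  unfold rpT rT sigmaT
  generalize (2 * j - 1) * t = x at *
  have hq : 1 ≤ q := by
    by_contra hq
    have : (l : ℤ) * q ≤ l * 0 := by gcongr; omega
    nlinarith
  obtain ⟨q, rfl⟩ : ∃ n : ℕ, q = n + 1 := ⟨(q - 1).toNat, by omega⟩
  obtain rfl : x = 2 * l * q + (2 * l - (2 * k - 1)) := by
    zify [show 1 ≤ 2 * k by omega, show 2 * k - 1 ≤ 2 * l by omega]; linarith
  have hmod : (2 * l * q + (2 * l - (2 * k - 1))) % (2 * l) = 2 * l - (2 * k - 1) := by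
    rw [Nat.mul_add_mod, Nat.mod_eq_of_lt (by omega)]
  have hdiv : (2 * l * q + (2 * l - (2 * k - 1))) / l = 2 * q + 1 := by
    rw [show 2 * l * q + (2 * l - (2 * k - 1)) = l * (2 * q + 1) + (l - (2 * k - 1)) by
      rw [show 2 * l * q = l * (2 * q) by ring, mul_add]; omega,
      Nat.mul_add_div (by omega), Nat.div_eq_of_lt (by omega), add_zero]
  rw [hmod, hdiv, if_neg (by omega)]
  exact ⟨by omega, by simp [pow_succ]⟩

theorem exists_eq_add_or_sub_of_rpT {l t j k : ℕ} (hl : 0 < l) (hx : Odd ((2 * j - 1) * t))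
    (h : rpT l t j = k) :
    ∃ q : ℤ, (((2 * j - 1) * t : ℕ) : ℤ) = 2 * l * q + (2 * k - 1) ∨
      (((2 * j - 1) * t : ℕ) : ℤ) = 2 * l * q - (2 * k - 1) := by
  unfold rpT rT at h
  generalize (2 * j - 1) * t = x at *
  obtain ⟨y, hy⟩ := hx
  have hdm := Nat.div_add_mod x (2 * l)
  have hass : 2 * l * (x / (2 * l)) = 2 * (l * (x / (2 * l))) := mul_assoc ..
  have hle := Nat.mod_lt x (y := 2 * l)
  have hcast : ((2 * l * (x / (2 * l)) : ℕ) : ℤ) = 2 * l * (x / (2 * l) : ℕ) := by push_cast; rfl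
  split_ifs at h with hlt
  · refine ⟨(x / (2 * l) : ℕ), Or.inl ?_⟩
    rw [← hcast]; omega
  · refine ⟨(x / (2 * l) : ℕ) + 1, Or.inr ?_⟩
    rw [mul_add, ← hcast]; omega

theorem iT_spec {l t k : ℕ} (h : ∃ j, j ∈ Finset.Icc 1 ((l - 1) / 2) ∧ rpT l t j = k) :
    iT l t k ∈ Finset.Icc 1 ((l - 1) / 2) ∧ rpT l t (iT l t k) = k := by
  unfold iT
  rw [dif_pos h]
  exact h.choose_spec

/-- The value `k = sp + a` is attained by `r'`: the preimage `j` has `2j - 1 = l - (s + 2m(2a-1))`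
for even `s` and `2j - 1 = s + 2m(2a-1)` for odd `s`, since `4mp ≡ 1` modulo `l`. -/
theorem exists_rpT_eq {m p s a l t : ℕ} (hl : l + 1 = 4 * m * p) (ht : t + 2 * p = l)
    (ha : 1 ≤ a) (hm : 0 < m) (hlt : s + 2 * m * (2 * a - 1) < l)
    (hkl : 2 * (s * p + a) ≤ l) :
    ∃ j, j ∈ Finset.Icc 1 ((l - 1) / 2) ∧ rpT l t j = s * p + a := by
  obtain ⟨b, rfl⟩ : ∃ b, a = b + 1 := ⟨a - 1, by omega⟩
  rw [show 2 * (b + 1) - 1 = 2 * b + 1 by omega] at hlt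
  have hl' : (l : ℤ) = 4 * m * p - 1 := by zify at hl; linarith
  have ht' : (t : ℤ) = 4 * m * p - 1 - 2 * p := by omega
  have hlodd : l % 2 = 1 := by
    have : 4 * m * p = 2 * (2 * m * p) := by ring
    omega
  have hassoc : 2 * m * (2 * b + 1) = 2 * (m * (2 * b + 1)) := mul_assoc ..
  have hpos : 0 < m * (2 * b + 1) := by positivity
  rcases Nat.even_or_odd' s with ⟨c, rfl | rfl⟩
  · obtain ⟨j, hj⟩ : ∃ j, 2 * j = l - (2 * c + 2 * m * (2 * b + 1)) + 1 :=
      ⟨(l - (2 * c + 2 * m * (2 * b + 1)) + 1) / 2, by omega⟩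
    refine ⟨j, by simp only [Finset.mem_Icc]; omega,
      (rpT_and_sigmaT_of_eq_add (q := j - p + b) (by omega) hkl ?_).1⟩
    have hj' : (2 * j : ℤ) = l - (2 * c + 2 * m * (2 * b + 1)) + 1 := by
      zify [hlt.le] at hj; exact hj
    push_cast [show 1 ≤ 2 * j by omega]
    rw [ht', hl'] at *
    linear_combination (-2 * p : ℤ) * hj'
  · obtain ⟨j, hj⟩ : ∃ j, 2 * j = 2 * c + 1 + 2 * m * (2 * b + 1) + 1 :=
      ⟨(2 * c + 1 + 2 * m * (2 * b + 1) + 1) / 2, by omega⟩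
    refine ⟨j, by simp only [Finset.mem_Icc]; omega,
      (rpT_and_sigmaT_of_eq_sub (q := j - b - 1) (by omega) hkl ?_).1⟩
    have hj' : (2 * j : ℤ) = 2 * c + 1 + 2 * m * (2 * b + 1) + 1 := by
      exact_mod_cast hj
    push_cast [show 1 ≤ 2 * j by omega]
    rw [ht', hl'] at *
    linear_combination (-2 * p : ℤ) * hj'

theorem sigmaT_eq_neg_one_pow_s6 {m p s a l t j : ℕ} (hl : l + 1 = 4 * m * p)
    (ht : t + 2 * p = l) (ha : 1 ≤ a) (hlt : s + 2 * m * (2 * a - 1) < l) (hm : 0 < m)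
    (hkl : 2 * (s * p + a) ≤ l) (hj : j ∈ Finset.Icc 1 ((l - 1) / 2))
    (hr : rpT l t j = s * p + a) : sigmaT l t j = (-1) ^ s := by
  rw [Finset.mem_Icc] at hj
  obtain ⟨b, rfl⟩ : ∃ b, a = b + 1 := ⟨a - 1, by omega⟩
  rw [show 2 * (b + 1) - 1 = 2 * b + 1 by omega] at hlt
  have hl' : (l : ℤ) = 4 * m * p - 1 := by zify at hl; linarith
  have ht' : (t : ℤ) = 4 * m * p - 1 - 2 * p := by omega
  have hlodd : l % 2 = 1 := by
    have : 4 * m * p = 2 * (2 * m * p) := by ring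
    omega
  have hxodd : Odd ((2 * j - 1) * t) :=
    Nat.odd_mul.2 ⟨⟨j - 1, by omega⟩, Nat.odd_iff.2 (by omega)⟩
  have hpos : 0 < 2 * m * (2 * b + 1) := by positivity
  zify at hlt hpos
  have hj1 : (1 : ℤ) ≤ j := by omega
  have hj2 : (2 * j : ℤ) + 1 ≤ l := by omega
  obtain ⟨q, hq | hq⟩ := exists_eq_add_or_sub_of_rpT (by omega) hxodd hr
  · rw [(rpT_and_sigmaT_of_eq_add (by omega) hkl hq).2]
    push_cast [show 1 ≤ 2 * j by omega] at hq
    obtain ⟨w, hw⟩ : ∃ w : ℤ, w = 2 * m * (2 * j - 1) - (2 * j - 1) - 4 * m * q - s := ⟨_, rfl⟩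
    have hwl : (2 * j - 1 : ℤ) = l * w - (s + 2 * m * (2 * b + 1)) := by
      rw [hw]; rw [ht', hl'] at *
      linear_combination (-2 * m : ℤ) * hq
    have hw1 : w = 1 := by
      have h0 : 0 < w := by by_contra h0; nlinarith
      have h2 : w < 2 := by by_contra h2; nlinarith
      omega
    have hs : Even s := by
      have : (s : ℤ) = 2 * (m * (2 * j - 1) - j - 2 * m * q) := by linarith
      exact Nat.even_iff.2 (by omega)
    exact hs.neg_one_pow.symm
  · rw [(rpT_and_sigmaT_of_eq_sub (by omega) hkl hq).2]
    push_cast [show 1 ≤ 2 * j by omega] at hq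
    obtain ⟨w, hw⟩ : ∃ w : ℤ, w = 2 * m * (2 * j - 1) - (2 * j - 1) - 4 * m * q + s := ⟨_, rfl⟩
    have hwl : (2 * j - 1 : ℤ) = l * w + (s + 2 * m * (2 * b + 1)) := by
      rw [hw]; rw [ht', hl'] at *
      linear_combination (-2 * m : ℤ) * hq
    have hw0 : w = 0 := by
      have h0 : -1 < w := by by_contra h0; nlinarith
      have h2 : w < 1 := by by_contra h2; nlinarith
      omega
    have hs : Odd s := by
      have : (s : ℤ) = 2 * (-(m * (2 * j - 1)) + j + 2 * m * q) - 1 := by linarith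
      exact Nat.odd_iff.2 (by omega)
    exact hs.neg_one_pow.symm

/-- Lemma 2.2(iii): for `l = 4mp-1`, `t = 4mp-2p-1`, `σ_(i_k)` alternates between
`1` and `-1` on successive intervals of length `p`, starting with `1`. -/
theorem sigma_iT_formula_neg_neg
    (m p s k : ℕ) (hm : 0 < m) (hp : 0 < p)
    (hs : s ≤ 2 * m - 1) (hk1 : s * p + 1 ≤ k)
    (hk2 : k ≤ min ((s + 1) * p) (2 * m * p - 1)) :
    sigmaT (4 * m * p - 1) (4 * m * p - 2 * p - 1) (iT (4 * m * p - 1) (4 * m * p - 2 * p - 1) k) = (-1 : ℤ) ^ s := by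
  rw [le_min_iff] at hk2
  obtain ⟨a, rfl⟩ : ∃ a, k = s * p + a := ⟨k - s * p, by omega⟩
  have ha : 1 ≤ a := by omega
  have hap : a ≤ p := by rw [add_mul] at hk2; omega
  have hmp : 2 * (m * p) ≥ 2 * p := by nlinarith
  have h4 : 4 * m * p = 4 * (m * p) := mul_assoc ..
  have h2 : 2 * m * p = 2 * (m * p) := mul_assoc ..
  have hl : 4 * m * p - 1 + 1 = 4 * m * p := by omega
  have ht : 4 * m * p - 2 * p - 1 + 2 * p = 4 * m * p - 1 := by omega
  have hkl : 2 * (s * p + a) ≤ 4 * m * p - 1 := by omega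
  have hlt : s + 2 * m * (2 * a - 1) < 4 * m * p - 1 := by
    obtain ⟨b, rfl⟩ : ∃ b, a = b + 1 := ⟨a - 1, by omega⟩
    rw [show 2 * (b + 1) - 1 = 2 * b + 1 by omega]
    have hexp : 2 * m * (2 * b + 1) = 4 * (m * b) + 2 * m := by ring
    rcases hap.lt_or_eq with hlt | rfl
    · have : m * (b + 2) ≤ m * p := Nat.mul_le_mul_left m hlt
      rw [mul_add] at this
      omega
    · rcases (show s = 2 * m - 1 ∨ s + 2 ≤ 2 * m by omega) with h | h
      · have : s + 1 = 2 * m := by omega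
        rw [← this, add_mul] at hk2
        omega
      · have : m * (b + 1) = m * b + m := by ring
        omega
  obtain ⟨hmem, hr⟩ := iT_spec (exists_rpT_eq hl ht ha hm hlt hkl)
  exact sigmaT_eq_neg_one_pow_s6 hl ht ha hlt hm hkl hmem hr

end
end

section
/- Let m and p be positive integers and set l = 4mp−1, t = 4mp−2p−1, p' = 2mp−1. Then for every integer j with 1 ≤ j ≤ p'−1 one has σ_{j+1} + σ_{p'+1−j} = 0; that is, σ_{j+1} = −σ_{2mp−j}. -/
open Finset

noncomputable section

/-- Signs with exponents whose sum is odd cancel. -/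
lemma neg_one_pow_add_eq_zero_of_odd {x y : ℕ} (h : Odd (x + y)) :
    (-1 : ℤ) ^ x + (-1) ^ y = 0 := by
  rcases Nat.even_or_odd x with hx | hx
  · rw [hx.neg_one_pow, ((Nat.odd_add'.1 h).2 hx).neg_one_pow]
    norm_num
  · rw [hx.neg_one_pow, ((Nat.odd_add.1 h).1 hx).neg_one_pow]
    norm_num

/-- Write `4jp = a l + c` with `0 < c ≤ l - 2p`, where `l = 4mp - 1`. -/
lemma exists_four_mul_eq_mul_add {m p j : ℕ} (hm : 0 < m) (hj1 : 1 ≤ j)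
    (hj2 : j < 2 * m * p) :
    ∃ a c : ℤ, 4 * (j : ℤ) * p = a * (4 * m * p - 1) + c ∧ 0 < c ∧
      c ≤ 4 * m * p - 1 - 2 * p := by
  have ha : j / m < 2 * p := Nat.div_lt_of_lt_mul (by linarith)
  have hb : j % m < m := Nat.mod_lt _ hm
  have hj : m * (j / m) + j % m = j := Nat.div_add_mod j m
  generalize j / m = a at *
  generalize j % m = b at *
  subst hj
  refine ⟨a, a + 4 * p * b, by push_cast; ring, ?_, ?_⟩
  · rcases Nat.eq_zero_or_pos a with rfl | h
    · have hb0 : 0 < b := by simpa [Nat.one_le_iff_ne_zero, Nat.pos_iff_ne_zero] using hj1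
      have hp : 0 < p := by linarith
      positivity
    · positivity
  · have h : p * (b + 1) ≤ p * m := Nat.mul_le_mul_left p hb
    zify at h ha
    linarith

/-- Lemma 2.3(ii): for `l = 4mp-1`, `t = 4mp-2p-1`, `p' = 2mp-1`, one has
`σ_(j+1) + σ_(p'+1-j) = 0` for `1 ≤ j ≤ p'-1`. -/
theorem sigma_pair_sum_neg_neg
    (m p j : ℕ) (hm : 0 < m) (hp : 0 < p)
    (hj1 : 1 ≤ j) (hj2 : j ≤ 2 * m * p - 2) :
    sigmaT (4 * m * p - 1) (4 * m * p - 2 * p - 1) (j + 1) + sigmaT (4 * m * p - 1) (4 * m * p - 2 * p - 1) (2 * m * p - j) = 0 := by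
  have hmp : p ≤ m * p := Nat.le_mul_of_pos_left p hm
  have e1 : 4 * m * p = 4 * (m * p) := by ring
  have e2 : 2 * m * p = 2 * (m * p) := by ring
  obtain ⟨a, c, h, hc0, hc⟩ := exists_four_mul_eq_mul_add (p := p) hm hj1 (by omega)
  unfold sigmaT
  apply neg_one_pow_add_eq_zero_of_odd
  have hl : ((4 * m * p - 1 : ℕ) : ℤ) = 4 * m * p - 1 := by
    rw [Nat.cast_sub (by omega)]; push_cast; ring
  have ht : ((4 * m * p - 2 * p - 1 : ℕ) : ℤ) = 4 * m * p - 1 - 2 * p := by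
    rw [Nat.sub_sub, Nat.cast_sub (by omega)]; push_cast; ring
  have hA : ((2 * (j + 1) - 1 : ℕ) : ℤ) = 2 * j + 1 := by omega
  have hB : ((2 * (2 * m * p - j) - 1 : ℕ) : ℤ) = 4 * m * p - 1 - 2 * j := by
    rw [Nat.mul_sub, Nat.sub_sub, Nat.cast_sub (by omega)]; push_cast; ring
  have hp' : (0 : ℤ) < p := by exact_mod_cast hp
  have q1 : (((2 * (j + 1) - 1) * (4 * m * p - 2 * p - 1) / (4 * m * p - 1) : ℕ) : ℤ)
      = 2 * j - a := by
    rw [Int.natCast_div, Nat.cast_mul, hA, ht, hl,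
      Int.ediv_eq_iff_of_pos (by linarith)]
    constructor <;> linarith
  have q2 : (((2 * (2 * m * p - j) - 1) * (4 * m * p - 2 * p - 1) / (4 * m * p - 1) : ℕ) : ℤ)
      = 4 * m * p - 1 - 2 * p - 2 * j + a := by
    rw [Int.natCast_div, Nat.cast_mul, hB, ht, hl,
      Int.ediv_eq_iff_of_pos (by linarith)]
    constructor <;> linarith
  rw [← Int.odd_coe_nat, Nat.cast_add, q1, q2]
  exact ⟨2 * m * p - p - 1, by ring⟩

end
end

section
/- Let m and p be positive integers and set l = 4mp+1 and t = 4mp−2p+1. Then for every integer j with 1 ≤ j ≤ 2mp, the sign σ_j = (−1)^{⌊(2j−1)t/l⌋} equals 1 if j mod 2m lies in {1, 2, …, m}, and equals −1 if j mod 2m lies in {0, m+1, m+2, …, 2m−1}. -/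
open Finset

noncomputable section

/-- The parity of the quotient `q = ⌊(2j-1)t/l⌋`, located by `q l ≤ (2j-1)t < (q+1)l`,
determines `σ_j`. -/
theorem sigmaT_eq_of_le_of_lt {l t j q : ℕ} (h₁ : q * l ≤ (2 * j - 1) * t)
    (h₂ : (2 * j - 1) * t < (q + 1) * l) : sigmaT l t j = (-1) ^ q := by
  rw [sigmaT, Nat.div_eq_of_lt_le h₁ h₂]

/-- Lemma 2.4(i): for `l = 4mp+1`, `t = 4mp-2p+1`, the sign `σ_j` is `1` if
`j ≡ 1, …, m (mod 2m)` and `-1` if `j ≡ 0, m+1, …, 2m-1 (mod 2m)`. -/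
theorem sigma_formula_neg_pos
    (m p : ℕ) (hm : 0 < m) (hp : 0 < p)
    (j : ℕ) (hj1 : 1 ≤ j) (hj2 : j ≤ 2 * m * p) :
    (1 ≤ j % (2 * m) ∧ j % (2 * m) ≤ m →
      sigmaT (4 * m * p + 1) (4 * m * p - 2 * p + 1) j = 1) ∧
    (j % (2 * m) = 0 ∨ m + 1 ≤ j % (2 * m) →
      sigmaT (4 * m * p + 1) (4 * m * p - 2 * p + 1) j = -1) := by
  obtain ⟨n, rfl⟩ : ∃ n, m = n + 1 := ⟨m - 1, by omega⟩
  have ht : 4 * (n + 1) * p - 2 * p + 1 = 4 * n * p + 2 * p + 1 := by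
    have : 4 * (n + 1) * p = 4 * n * p + 4 * p := by ring
    omega
  rw [ht]
  have hdiv := Nat.div_add_mod j (2 * (n + 1))
  have hlt := Nat.mod_lt j (show 0 < 2 * (n + 1) by omega)
  set k := j / (2 * (n + 1))
  set r := j % (2 * (n + 1))
  have hkp : k ≤ p := by
    by_contra! h
    nlinarith [Nat.mul_le_mul_left (2 * (n + 1)) h]
  have hkp' : 1 ≤ r → k < p := by
    intro hr
    by_contra! h
    nlinarith [Nat.mul_le_mul_left (2 * (n + 1)) h]
  refine ⟨fun ⟨hr1, hr2⟩ => ?_, fun hr => ?_⟩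
  · obtain ⟨s, hs⟩ : ∃ s, r = s + 1 := ⟨r - 1, by omega⟩
    have hk := hkp' hr1
    have hsp : s * p ≤ n * p := Nat.mul_le_mul_right p (by omega)
    have hj : 2 * j - 1 = 4 * (n + 1) * k + 2 * s + 1 := by
      have : 4 * (n + 1) * k = 2 * (2 * (n + 1) * k) := by ring
      omega
    rw [sigmaT_eq_of_le_of_lt (q := 2 * ((2 * n + 1) * k + s)), pow_mul]
    · simp
    · rw [hj]; nlinarith
    · rw [hj]; nlinarith
  · rcases hr with hr | hr
    · obtain ⟨i, hi⟩ : ∃ i, k = i + 1 := by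
        refine Nat.exists_eq_succ_of_ne_zero fun h => ?_
        rw [h, hr] at hdiv
        omega
      have hj : 2 * j - 1 = 4 * (n + 1) * i + 4 * n + 3 := by
        have : 2 * j = 4 * (n + 1) * i + 4 * n + 4 := by
          rw [← hdiv, hr, hi]; ring
        omega
      rw [sigmaT_eq_of_le_of_lt (q := 2 * ((2 * n + 1) * i + 2 * n) + 1), pow_succ, pow_mul]
      · simp
      · rw [hj]; nlinarith
      · rw [hj]; nlinarith
    · obtain ⟨s, hs⟩ : ∃ s, r = n + 2 + s := ⟨r - (n + 2), by omega⟩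
      have hk := hkp' (by omega)
      have hsp : s * p ≤ n * p := Nat.mul_le_mul_right p (by omega)
      have hj : 2 * j - 1 = 4 * (n + 1) * k + 2 * n + 2 * s + 3 := by
        have : 4 * (n + 1) * k = 2 * (2 * (n + 1) * k) := by ring
        omega
      rw [sigmaT_eq_of_le_of_lt (q := 2 * ((2 * n + 1) * k + n + s) + 1), pow_succ, pow_mul]
      · simp
      · rw [hj]; nlinarith
      · rw [hj]; nlinarith

end
end
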